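/- arXiv:1908.03713 — 4 statements merged into one kernel-verified Lean document; each statement's English description precedes it below -/
import Mathlib

section
/- If S ⊂ ℝ^n is an algebraic interior with minimal-degree defining polynomial p, then p divides every defining polynomial of S; in particular, minimal-degree defining polynomials are unique up to multiplication by a positive constant. -/
open Matrix

/-- `S ⊆ ℝⁿ` is an algebraic interior with defining polynomial `p` if it is the
closure of a connected component of `{x : p x > 0}`. -/
def IsDefiningPoly {n : ℕ} (S : Set (Fin n → ℝ)) (p : MvPolynomial (Fin n) ℝ) : Prop :=
  ∃ x₀ : Fin n → ℝ, 0 < MvPolynomial.eval x₀ p ∧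
    S = closure (connectedComponentIn {x : Fin n → ℝ | 0 < MvPolynomial.eval x p} x₀)

open Polynomial in
theorem exists_C_eq_of_isRelPrime {R : Type*} [CommRing R] [IsDomain R]
    [UniqueFactorizationMonoid R] (f g : R[X]) (h : IsRelPrime f g) :
    ∃ r : R, r ≠ 0 ∧ ∃ u v : R[X], C r = u * f + v * g := by
  classical
  let :  NormalizedGCDMonoid R := Classical.choice inferInstance
  let K := FractionRing R
  have hinj : Function.Injective (Polynomial.map (algebraMap R K)) :=
    Polynomial.map_injective _ (IsFractionRing.injective R K)
  have hrel : IsRelPrime (f.map (algebraMap R K)) (g.map (algebraMap R K)) := by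
    intro d hdf hdg
    have hd0 : d ≠ 0 := by
      rintro rfl
      rw [zero_dvd_iff] at hdf hdg
      have hf : f = 0 := hinj (by simpa using hdf)
      have hg : g = 0 := hinj (by simpa using hdg)
      have : IsUnit (0 : R[X]) := h (by rw [hf]) (by rw [hg])
      exact not_isUnit_zero this
    apply isUnit_or_eq_zero_of_isUnit_integerNormalization_primPart (R := R) hd0
    obtain ⟨b, hb, hbd⟩ := IsLocalization.integerNormalization_spec (nonZeroDivisors R) d
    set N := IsLocalization.integerNormalization (nonZeroDivisors R) d with hN
    have hb0 : algebraMap R K b ≠ 0 :=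
      IsFractionRing.to_map_ne_zero_of_mem_nonZeroDivisors hb
    have hdvd : N.primPart.map (algebraMap R K) ∣ d := by
      have h1 : N.primPart.map (algebraMap R K) ∣ N.map (algebraMap R K) :=
        Polynomial.map_dvd _ (primPart_dvd N)
      rw [hbd, ← IsScalarTower.algebraMap_smul K b d, smul_eq_C_mul] at h1
      have hu : IsUnit (C (algebraMap R K b)) := isUnit_C.mpr hb0.isUnit
      exact (hu.dvd_mul_left).mp h1
    exact h (N.isPrimitive_primPart.dvd_of_fraction_map_dvd_fraction_map (hdvd.trans hdf))
      (N.isPrimitive_primPart.dvd_of_fraction_map_dvd_fraction_map (hdvd.trans hdg))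
  obtain ⟨a, b, hab⟩ := hrel.isCoprime
  obtain ⟨s, hs, hsa⟩ := IsLocalization.integerNormalization_spec (nonZeroDivisors R) a
  obtain ⟨t, ht, htb⟩ := IsLocalization.integerNormalization_spec (nonZeroDivisors R) b
  refine ⟨s * t, mul_ne_zero (nonZeroDivisors.ne_zero hs) (nonZeroDivisors.ne_zero ht),
    C t * IsLocalization.integerNormalization (nonZeroDivisors R) a,
    C s * IsLocalization.integerNormalization (nonZeroDivisors R) b, hinj ?_⟩
  rw [← IsScalarTower.algebraMap_smul K, smul_eq_C_mul] at hsa htb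
  simp only [Polynomial.map_add, Polynomial.map_mul, Polynomial.map_C, hsa, htb, map_mul]
  linear_combination (-C (algebraMap R K s) * C (algebraMap R K t)) * hab

open MvPolynomial in
theorem exists_elim {n : ℕ} (i : Fin n) (f g : MvPolynomial (Fin n) ℝ) (h : IsRelPrime f g) :
    ∃ r : MvPolynomial (Fin n) ℝ, r ≠ 0 ∧
      (∀ z s, eval (Function.update z i s) r = eval z r) ∧
      ∃ u v : MvPolynomial (Fin n) ℝ, r = u * f + v * g := by
  let e := (renameEquiv ℝ (Equiv.optionSubtypeNe i).symm).trans
    (optionEquivLeft ℝ {j : Fin n // j ≠ i})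
  have hfg : IsRelPrime (e f) (e g) := by
    intro d hf hg
    have : IsUnit (e.symm d) := by
      apply h
      · simpa using map_dvd e.symm hf
      · simpa using map_dvd e.symm hg
    simpa using this.map e
  obtain ⟨r, hr, u, v, huv⟩ := exists_C_eq_of_isRelPrime _ _ hfg
  have he : e.symm (Polynomial.C r) = rename Subtype.val r := by
    have hh : (e.symm.toAlgHom).comp Polynomial.CAlgHom =
        rename (Subtype.val : {j : Fin n // j ≠ i} → Fin n) := by
      apply MvPolynomial.algHom_ext
      intro j
      simp [e, optionEquivLeft_symm_C_X]
    exact DFunLike.congr_fun hh r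
  refine ⟨e.symm (Polynomial.C r), by simpa using hr, ?_, e.symm u, e.symm v, ?_⟩
  · intro z s
    rw [he, eval_rename, eval_rename]
    congr 2
    ext j
    simp [Function.update_of_ne j.2]
  · rw [huv]; simp

theorem dense_ne_zero {n : ℕ} (r : MvPolynomial (Fin n) ℝ) (hr : r ≠ 0) :
    Dense {x : Fin n → ℝ | MvPolynomial.eval x r ≠ 0} := by
  rw [Metric.dense_iff]
  intro x ε hε
  by_contra hne
  apply hr
  refine MvPolynomial.funext_set (fun i => Metric.ball (x i) ε) (fun i => ?_) ?_
  · rw [Real.ball_eq_Ioo]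
    exact Set.Ioo_infinite (by linarith)
  · intro y hy
    rw [← ball_pi x hε] at hy
    by_contra h0
    exact hne ⟨y, hy, by simpa using h0⟩

theorem inter_frontier_ne {X : Type*} [TopologicalSpace X] (S : Set X) (hS : IsClosed S)
    (t : Set X) (ht : IsPreconnected t) (h1 : (t ∩ interior S).Nonempty)
    (h2 : (t ∩ Sᶜ).Nonempty) : (t ∩ frontier S).Nonempty := by
  by_contra hne
  have hsub : t ⊆ interior S ∪ Sᶜ := by
    intro x hx
    by_contra hx2
    rw [Set.mem_union, not_or, Set.mem_compl_iff, not_not] at hx2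
    exact hne ⟨x, hx, subset_closure hx2.2, hx2.1⟩
  obtain ⟨x, -, hx1, hx2⟩ := ht _ _ isOpen_interior hS.isOpen_compl hsub h1 h2
  exact hx2 (interior_subset hx1)

open MvPolynomial in
theorem ball_step {n : ℕ} (S : Set (Fin n → ℝ)) (hS : IsClosed S)
    (f g : MvPolynomial (Fin n) ℝ) (h : IsRelPrime f g) (c : Fin n → ℝ) (ε : ℝ) (hε : 0 < ε)
    (hfr : ∀ x ∈ Metric.ball c ε, x ∈ frontier S → eval x f = 0 ∧ eval x g = 0)
    (a : Fin n → ℝ) (ha : a ∈ Metric.ball c ε) (haS : a ∈ interior S) (i : Fin n) (t : ℝ)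
    (ht : Function.update a i t ∈ Metric.ball c ε) : Function.update a i t ∈ interior S := by
  obtain ⟨r, hr0, hr, u, v, huv⟩ := exists_elim i f g h
  let N : Set (Fin n → ℝ) := Metric.ball c ε ∩
    (fun z => Function.update z i (a i)) ⁻¹' (Metric.ball c ε ∩ interior S)
  have hNo : IsOpen N := by
    refine Metric.isOpen_ball.inter ((Metric.isOpen_ball.inter isOpen_interior).preimage ?_)
    exact continuous_id.update i continuous_const
  have haN : Function.update a i t ∈ N := ⟨ht, by simp [ha, haS]⟩
  refine interior_maximal ?_ hNo haN
  have key : N ∩ {x | eval x r ≠ 0} ⊆ S := by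
    rintro z ⟨⟨hz, hz1, hz2⟩, hzr⟩
    by_contra hzS
    have hpre : IsPreconnected ((fun s : ℝ => Function.update z i s) '' Set.uIcc (a i) (z i)) :=
      isPreconnected_uIcc.image _ ((continuous_const (y := z)).update i continuous_id).continuousOn
    obtain ⟨w, ⟨s, hs, rfl⟩, hw⟩ := inter_frontier_ne S hS _ hpre
      ⟨_, ⟨a i, Set.left_mem_uIcc, rfl⟩, hz2⟩
      ⟨z, ⟨z i, Set.right_mem_uIcc, by simp⟩, hzS⟩
    have hwb : Function.update z i s ∈ Metric.ball c ε := by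
      rw [ball_pi c hε] at hz hz1 ⊢
      intro j hj
      by_cases hji : j = i
      · subst hji
        have h1 := hz1 j hj
        have h2 : z j ∈ Metric.ball (c j) ε := hz j hj
        simp only [Function.update_self] at h1 ⊢
        rw [Real.ball_eq_Ioo] at *
        exact Set.OrdConnected.uIcc_subset Set.ordConnected_Ioo h1 h2 hs
      · simpa [Function.update_of_ne hji] using hz j hj
    obtain ⟨h1, h2⟩ := hfr _ hwb hw
    apply hzr
    rw [← hr z s, huv]
    simp [h1, h2]
  calc N ⊆ closure (N ∩ {x | eval x r ≠ 0}) :=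
        (dense_ne_zero r hr0).open_subset_closure_inter hNo
    _ ⊆ S := closure_minimal key hS

theorem ball_subset {n : ℕ} (S : Set (Fin n → ℝ)) (hS : IsClosed S)
    (f g : MvPolynomial (Fin n) ℝ) (h : IsRelPrime f g) (c : Fin n → ℝ) (ε : ℝ) (hε : 0 < ε)
    (hfr : ∀ x ∈ Metric.ball c ε, x ∈ frontier S →
      MvPolynomial.eval x f = 0 ∧ MvPolynomial.eval x g = 0)
    (a : Fin n → ℝ) (ha : a ∈ Metric.ball c ε) (haS : a ∈ interior S) :
    Metric.ball c ε ⊆ interior S := by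
  intro y hy
  have hmem : ∀ s : Finset (Fin n), s.piecewise y a ∈ Metric.ball c ε := by
    intro s
    rw [ball_pi c hε] at *
    intro j hj
    by_cases hjs : j ∈ s
    · simpa [hjs] using hy j hj
    · simpa [hjs] using ha j hj
  have : ∀ s : Finset (Fin n), s.piecewise y a ∈ interior S := by
    intro s
    induction s using Finset.induction_on with
    | empty => simpa using haS
    | insert j s hj ih =>
      have h1 := hmem (insert j s)
      rw [Finset.piecewise_insert] at h1 ⊢
      exact ball_step S hS f g h c ε hε hfr _ (hmem s) ih j _ h1
  simpa using this Finset.univ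

theorem frontier_zero {n : ℕ} (p : MvPolynomial (Fin n) ℝ) (x₀ x : Fin n → ℝ)
    (hx : x ∈ frontier (closure
      (connectedComponentIn {x : Fin n → ℝ | 0 < MvPolynomial.eval x p} x₀))) :
    MvPolynomial.eval x p = 0 := by
  set P := {x : Fin n → ℝ | 0 < MvPolynomial.eval x p} with hP
  have hc : Continuous fun x : Fin n → ℝ => MvPolynomial.eval x p := MvPolynomial.continuous_eval p
  have hPo : IsOpen P := isOpen_lt continuous_const hc
  have hcl : x ∈ closure (connectedComponentIn P x₀) := by
    simpa using frontier_subset_closure hx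
  have h0 : 0 ≤ MvPolynomial.eval x p := by
    have : closure (connectedComponentIn P x₀) ⊆ {x | 0 ≤ MvPolynomial.eval x p} :=
      closure_minimal (fun y hy => (show 0 < MvPolynomial.eval y p from connectedComponentIn_subset P x₀ hy).le)
        (isClosed_le continuous_const hc)
    exact this hcl
  by_contra hne
  have hxP : x ∈ P := lt_of_le_of_ne h0 (Ne.symm hne)
  have hxo : IsOpen (connectedComponentIn P x) := hPo.connectedComponentIn
  have hxx := mem_connectedComponentIn hxP
  obtain ⟨y, hy1, hy2⟩ := mem_closure_iff.mp hcl _ hxo hxx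
  have heq : connectedComponentIn P x = connectedComponentIn P x₀ :=
    (connectedComponentIn_eq hy1).trans (connectedComponentIn_eq hy2).symm
  apply hx.2
  exact interior_maximal (heq ▸ subset_closure) hxo hxx

theorem pos_on {n : ℕ} (g : MvPolynomial (Fin n) ℝ) (U : Set (Fin n → ℝ))
    (hU : IsPreconnected U) (hne : ∀ x ∈ U, MvPolynomial.eval x g ≠ 0) (y : Fin n → ℝ)
    (hy : y ∈ U) (hpos : 0 < MvPolynomial.eval y g) : ∀ x ∈ U, 0 < MvPolynomial.eval x g := by
  intro x hx
  by_contra hneg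
  obtain ⟨z, hz, hz0⟩ := hU.intermediate_value hx hy
    (MvPolynomial.continuous_eval g).continuousOn (Set.mem_Icc.mpr ⟨not_lt.mp hneg, hpos.le⟩)
  exact hne z hz hz0

theorem common_point {n : ℕ} (S : Set (Fin n → ℝ)) (p q : MvPolynomial (Fin n) ℝ)
    (x₀ y₀ : Fin n → ℝ) (hx : 0 < MvPolynomial.eval x₀ p)
    (hSp : S = closure (connectedComponentIn {x : Fin n → ℝ | 0 < MvPolynomial.eval x p} x₀))
    (hSq : S = closure (connectedComponentIn {x : Fin n → ℝ | 0 < MvPolynomial.eval x q} y₀)) :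
    ∃ w, w ∈ connectedComponentIn {x : Fin n → ℝ | 0 < MvPolynomial.eval x p} x₀ ∧
      w ∈ connectedComponentIn {x : Fin n → ℝ | 0 < MvPolynomial.eval x q} y₀ := by
  have hPo : IsOpen {x : Fin n → ℝ | 0 < MvPolynomial.eval x p} :=
    isOpen_lt continuous_const (MvPolynomial.continuous_eval p)
  have hx0 : x₀ ∈ connectedComponentIn {x : Fin n → ℝ | 0 < MvPolynomial.eval x p} x₀ :=
    mem_connectedComponentIn hx
  have h1 : x₀ ∈ closure (connectedComponentIn {x : Fin n → ℝ | 0 < MvPolynomial.eval x q} y₀) := by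
    rw [← hSq, hSp]; exact subset_closure hx0
  obtain ⟨w, hw1, hw2⟩ := mem_closure_iff.mp h1 _ hPo.connectedComponentIn hx0
  exact ⟨w, hw1, hw2⟩

theorem gcd_defining {n : ℕ} (S : Set (Fin n → ℝ)) (g p' q' : MvPolynomial (Fin n) ℝ)
    (hrel : IsRelPrime p' q') (x₀ y₀ w : Fin n → ℝ)
    (hSp : S = closure
      (connectedComponentIn {x : Fin n → ℝ | 0 < MvPolynomial.eval x (g * p')} x₀))
    (hSq : S = closure
      (connectedComponentIn {x : Fin n → ℝ | 0 < MvPolynomial.eval x (g * q')} y₀))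
    (hw1 : w ∈ connectedComponentIn {x : Fin n → ℝ | 0 < MvPolynomial.eval x (g * p')} x₀)
    (hg : 0 < MvPolynomial.eval w g) : IsDefiningPoly S g := by
  refine ⟨w, hg, ?_⟩
  set G := {x : Fin n → ℝ | 0 < MvPolynomial.eval x g} with hG
  set P := {x : Fin n → ℝ | 0 < MvPolynomial.eval x (g * p')} with hP
  have hGo : IsOpen G := isOpen_lt continuous_const (MvPolynomial.continuous_eval g)
  have hPo : IsOpen P := isOpen_lt continuous_const (MvPolynomial.continuous_eval _)
  have hWo : IsOpen (connectedComponentIn G w) := hGo.connectedComponentIn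
  have hSc : IsClosed S := hSp ▸ isClosed_closure
  have hUG : connectedComponentIn P x₀ ⊆ G := by
    refine pos_on g _ isPreconnected_connectedComponentIn (fun x hx h0 => ?_) w hw1 hg
    have := connectedComponentIn_subset P x₀ hx
    simp [hP, h0] at this
  have hUW : connectedComponentIn P x₀ ⊆ connectedComponentIn G w :=
    isPreconnected_connectedComponentIn.subset_connectedComponentIn hw1 hUG
  have hUi : connectedComponentIn P x₀ ⊆ interior S :=
    interior_maximal (hSp ▸ subset_closure) hPo.connectedComponentIn
  have hWS : connectedComponentIn G w ⊆ interior S := by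
    refine isPreconnected_connectedComponentIn.subset_of_closure_inter_subset isOpen_interior
      ⟨w, hUW hw1, hUi hw1⟩ ?_
    rintro x ⟨hxc, hxW⟩
    obtain ⟨ε, hε, hball⟩ := Metric.isOpen_iff.mp hWo x hxW
    obtain ⟨a, ha, haS⟩ := mem_closure_iff.mp hxc _ Metric.isOpen_ball (Metric.mem_ball_self hε)
    refine ball_subset S hSc p' q' hrel x ε hε ?_ a ha haS (Metric.mem_ball_self hε)
    intro z hz hzS
    have hzg : MvPolynomial.eval z g ≠ 0 :=
      ne_of_gt (connectedComponentIn_subset G w (hball hz))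
    have h1 := frontier_zero (g * p') x₀ z (hSp ▸ hzS)
    have h2 := frontier_zero (g * q') y₀ z (hSq ▸ hzS)
    rw [map_mul] at h1 h2
    exact ⟨(mul_eq_zero.mp h1).resolve_left hzg, (mul_eq_zero.mp h2).resolve_left hzg⟩
  apply Set.Subset.antisymm
  · rw [hSp]; exact closure_mono hUW
  · exact closure_minimal (hWS.trans interior_subset) hSc

theorem dvd_of_minimal {n : ℕ} (S : Set (Fin n → ℝ))
    (p : MvPolynomial (Fin n) ℝ) (hp : IsDefiningPoly S p)
    (hmin : ∀ q : MvPolynomial (Fin n) ℝ, IsDefiningPoly S q →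
      p.totalDegree ≤ q.totalDegree)
    (q : MvPolynomial (Fin n) ℝ) (hq : IsDefiningPoly S q) : p ∣ q := by
  obtain ⟨x₀, hx₀, hSp⟩ := hp
  obtain ⟨y₀, hy₀, hSq⟩ := hq
  have hp0 : p ≠ 0 := by rintro rfl; simp at hx₀
  obtain ⟨w, hw1, hw2⟩ := common_point S p q x₀ y₀ hx₀ hSp hSq
  obtain ⟨p', q', g, hrel, rfl, rfl⟩ := UniqueFactorizationMonoid.exists_reduced_factors p hp0 q
  have hdeg : (g * p').totalDegree ≤ g.totalDegree := by
    have hwp := connectedComponentIn_subset _ _ hw1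
    have hgw : MvPolynomial.eval w g ≠ 0 := by
      intro h0
      simp [h0] at hwp
    rcases lt_or_gt_of_ne hgw with hneg | hpos
    · have := hmin (-g) (gcd_defining S (-g) (-p') (-q') ?_ x₀ y₀ w (by simpa using hSp)
        (by simpa using hSq) (by simpa using hw1) (by simpa using hneg))
      · simpa using this
      · intro d h1 h2
        exact hrel (by simpa using h1) (by simpa using h2)
    · exact hmin g (gcd_defining S g p' q' hrel x₀ y₀ w hSp hSq hw1 hpos)
  have hg0 : g ≠ 0 := left_ne_zero_of_mul hp0
  have hp'0 : p' ≠ 0 := right_ne_zero_of_mul hp0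
  rw [MvPolynomial.totalDegree_mul_of_isDomain hg0 hp'0] at hdeg
  have hz : p'.totalDegree = 0 := by omega
  rw [MvPolynomial.totalDegree_eq_zero_iff_eq_C] at hz
  have hu : IsUnit p' := by
    rw [hz] at hp'0 ⊢
    refine IsUnit.map _ (IsUnit.mk0 _ ?_)
    intro h0
    exact hp'0 (by rw [h0, map_zero])
  exact mul_dvd_mul_left g hu.dvd

/-- A defining polynomial of minimal degree of an algebraic interior `S` divides every
defining polynomial of `S`; in particular, minimal-degree defining polynomials are
unique up to a positive constant factor. -/
theorem minimal_defining_poly_divides {n : ℕ} (S : Set (Fin n → ℝ))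
    (p : MvPolynomial (Fin n) ℝ) (hp : IsDefiningPoly S p)
    (hmin : ∀ q : MvPolynomial (Fin n) ℝ, IsDefiningPoly S q →
      p.totalDegree ≤ q.totalDegree) :
    (∀ q : MvPolynomial (Fin n) ℝ, IsDefiningPoly S q → p ∣ q) ∧
    (∀ q : MvPolynomial (Fin n) ℝ, IsDefiningPoly S q →
      (∀ r : MvPolynomial (Fin n) ℝ, IsDefiningPoly S r →
        q.totalDegree ≤ r.totalDegree) → ∃ c : ℝ, 0 < c ∧ q = c • p) := by
  refine ⟨dvd_of_minimal S p hp hmin, fun q hq hqmin => ?_⟩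
  obtain ⟨k, hk⟩ := dvd_of_minimal S p hp hmin q hq
  have hle := hqmin p hp
  obtain ⟨x₀, hx₀, hSp⟩ := hp
  obtain ⟨y₀, hy₀, hSq⟩ := hq
  obtain ⟨w, hw1, hw2⟩ := common_point S p q x₀ y₀ hx₀ hSp hSq
  have hwp : 0 < MvPolynomial.eval w p :=
    connectedComponentIn_subset {x | 0 < MvPolynomial.eval x p} _ hw1
  have hwq : 0 < MvPolynomial.eval w q :=
    connectedComponentIn_subset {x | 0 < MvPolynomial.eval x q} _ hw2
  have hp0 : p ≠ 0 := by rintro rfl; simp at hx₀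
  have hk0 : k ≠ 0 := by rintro rfl; simp [hk] at hwq
  rw [hk, MvPolynomial.totalDegree_mul_of_isDomain hp0 hk0] at hle
  have hz : k.totalDegree = 0 := by omega
  rw [MvPolynomial.totalDegree_eq_zero_iff_eq_C] at hz
  refine ⟨MvPolynomial.coeff 0 k, ?_, ?_⟩
  · rw [hk, hz, map_mul, MvPolynomial.eval_C] at hwq
    exact (pos_iff_pos_of_mul_pos hwq).mp hwp
  · rw [MvPolynomial.smul_eq_C_mul, ← hz, hk, mul_comm]
end

section
/- Let R ∈ Sym²_b(∧²ℝ⁴) satisfy sec_R ≥ 0 but not sec_R > 0, and suppose x₀ ∈ ℝ is such that R + x₀* ⪰ 0. Then x₀ is a root of multiplicity at least 2 of the polynomial x ↦ det(R + x*). In particular, the discriminant disc_x(det(R + x*)) vanishes on the topological boundary of the set of R with sec_R ≥ 0. -/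
open Matrix Polynomial

/-- Plücker coordinates of `X ∧ Y ∈ ∧²ℝ⁴`. -/
def wedge (X Y : Fin 4 → ℝ) : Fin 6 → ℝ :=
  ![X 0 * Y 1 - X 1 * Y 0, X 0 * Y 2 - X 2 * Y 0, X 0 * Y 3 - X 3 * Y 0,
    X 1 * Y 2 - X 2 * Y 1, X 1 * Y 3 - X 3 * Y 1, X 2 * Y 3 - X 3 * Y 2]

/-- The Hodge star operator on `∧²ℝ⁴`, in the Plücker basis. -/
def hodgeStar : Matrix (Fin 6) (Fin 6) ℝ :=
  !![0,0,0,0,0,1; 0,0,0,0,-1,0; 0,0,0,1,0,0; 0,0,1,0,0,0; 0,-1,0,0,0,0; 1,0,0,0,0,0]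

/-- The first Bianchi identity. -/
def Bianchi (R : Matrix (Fin 6) (Fin 6) ℝ) : Prop :=
  ∀ X Y Z W : Fin 4 → ℝ,
    R.mulVec (wedge X Y) ⬝ᵥ wedge Z W + R.mulVec (wedge Y Z) ⬝ᵥ wedge X W +
      R.mulVec (wedge Z X) ⬝ᵥ wedge Y W = 0

/-- `sec_R ≥ 0`. -/
def SecNonneg (R : Matrix (Fin 6) (Fin 6) ℝ) : Prop :=
  ∀ X Y : Fin 4 → ℝ, wedge X Y ⬝ᵥ wedge X Y = 1 → 0 ≤ R.mulVec (wedge X Y) ⬝ᵥ wedge X Y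

/-- `sec_R > 0`. -/
def SecPos (R : Matrix (Fin 6) (Fin 6) ℝ) : Prop :=
  ∀ X Y : Fin 4 → ℝ, wedge X Y ⬝ᵥ wedge X Y = 1 → 0 < R.mulVec (wedge X Y) ⬝ᵥ wedge X Y

/-- The polynomial `x ↦ det(R + x *)`. -/
noncomputable def detPencil (R : Matrix (Fin 6) (Fin 6) ℝ) : Polynomial ℝ :=
  (R.map Polynomial.C + (Polynomial.X : Polynomial ℝ) • hodgeStar.map Polynomial.C).det

/-- The discriminant of a complex polynomial:
`disc p = lead(p)^(2n-2) ∏_{i<j} (rᵢ - rⱼ)²` over the roots of `p`. -/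
noncomputable def disc (p : Polynomial ℂ) : ℂ :=
  p.leadingCoeff ^ (2 * p.natDegree - 2) *
    ∏ ij ∈ Finset.univ.filter
      (fun ij : Fin p.roots.toList.length × Fin p.roots.toList.length => ij.1 < ij.2),
      (p.roots.toList.get ij.1 - p.roots.toList.get ij.2) ^ 2

/-- The space of algebraic curvature operators `Sym²_b(∧²ℝ⁴)`. -/
abbrev CurvOp := {M : Matrix (Fin 6) (Fin 6) ℝ // M.IsSymm ∧ Bianchi M}

theorem sq_dvd_det_aux {S : Type*} [CommRing S] {n : Type*} [Fintype n] [DecidableEq n]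
    (M : Matrix n n S) (hM : Mᵀ = M) (u k : n → S) (q : S) (h : M *ᵥ u = q • k)
    (huk : u ⬝ᵥ k = 0) (i : n) : q ^ 2 ∣ (u i) ^ 2 * M.det := by
  set P : Matrix n n S := (1 : Matrix n n S).updateCol i u with hP
  have hPdet : P.det = u i := by
    rw [hP, ← Matrix.cramer_apply, Matrix.cramer_one]; simp
  have hPcol : P.col i = u := by ext j; simp [hP, Matrix.col]
  set N : Matrix n n S := Pᵀ * M * P with hN
  have hNdet : N.det = (u i) ^ 2 * M.det := by
    rw [hN, Matrix.det_mul, Matrix.det_mul, Matrix.det_transpose, hPdet]; ring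
  have hNs : Nᵀ = N := by
    rw [hN]; simp [Matrix.transpose_mul, hM, Matrix.mul_assoc]
  set c : n → S := Pᵀ *ᵥ k with hc
  have hci : c i = 0 := by
    have : c i = P.col i ⬝ᵥ k := rfl
    rw [this, hPcol, huk]
  have hcol : ∀ j, N j i = q * c j := by
    intro j
    have h1 : N j i = (N *ᵥ Pi.single i 1) j := by simp
    have h2 : P *ᵥ Pi.single i 1 = u := by rw [← hPcol]; ext j; simp
    rw [h1, hN, ← Matrix.mulVec_mulVec, h2, ← Matrix.mulVec_mulVec, h, Matrix.mulVec_smul]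
    rfl
  have e1 : N = N.updateCol i (q • c) := by
    ext a b
    by_cases hb : b = i
    · subst hb; simp [hcol]
    · simp [hb]
  set N' := N.updateCol i c with hN'
  have e2 : N' = N'.updateRow i (q • c) := by
    ext a b
    by_cases ha : a = i
    · subst ha
      by_cases hb : b = a
      · subst hb; simp [hN', hci]
      · have : N a b = q * c b := by rw [← hcol b, ← Matrix.transpose_apply N, hNs]
        simp [hN', hb, this]
    · simp [ha]
  rw [← hNdet, e1, Matrix.det_updateCol_smul, ← hN', e2, Matrix.det_updateRow_smul]
  exact ⟨(N'.updateRow i c).det, by ring⟩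

theorem s_lemma_aux {V : Type*} [AddCommGroup V] [Module ℝ V] (a b : V → ℝ)
    (ha : ∀ v w, ∃ α, ∀ s : ℝ, a (v + s • w) = a v + s * α + s ^ 2 * a w)
    (hb : ∀ v w, ∃ α, ∀ s : ℝ, b (v + s • w) = b v + s * α + s ^ 2 * b w)
    (h : ∀ v, b v = 0 → 0 ≤ a v) (v₁ v₂ : V) (h₁ : 0 < b v₁) (h₂ : b v₂ < 0) :
    ∃ t : ℝ, ∀ v, 0 ≤ a v + t * b v := by
  have key : ∀ v w, 0 < b v → b w < 0 → 0 ≤ a v * (- b w) + a w * b v := by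
    intro v w hv hw
    obtain ⟨α, hα⟩ := ha v w
    obtain ⟨β, hβ⟩ := hb v w
    set D := β ^ 2 - 4 * b w * b v with hD
    have hDpos : β ^ 2 < D := by nlinarith
    have hD0 : 0 ≤ D := by nlinarith [sq_nonneg β]
    set r := Real.sqrt D with hr
    have hr2 : r ^ 2 = D := Real.sq_sqrt hD0
    have hrβ : |β| < r := by
      rw [← Real.sqrt_sq_eq_abs]; exact Real.sqrt_lt_sqrt (sq_nonneg _) hDpos
    obtain ⟨hl, hu⟩ := abs_lt.mp hrβ
    -- work with roots `s = (-β ± r) / (2 b w)`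
    set s₁ := (-β + r) / (2 * b w) with hs1
    set s₂ := (-β - r) / (2 * b w) with hs2
    have hbw : b w ≠ 0 := hw.ne
    have n1 : s₁ < 0 := div_neg_of_pos_of_neg (by linarith) (by linarith)
    have p2 : 0 < s₂ := div_pos_of_neg_of_neg (by linarith) (by linarith)
    have hprod : s₁ * s₂ * b w = b v := by
      rw [hs1, hs2]; field_simp; linarith
    have z1 : b v + s₁ * β + s₁ ^ 2 * b w = 0 := by
      rw [hs1]; field_simp; linarith
    have z2 : b v + s₂ * β + s₂ ^ 2 * b w = 0 := by
      rw [hs2]; field_simp; linarith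
    have a1 := h (v + s₁ • w) (by rw [hβ, z1])
    have a2 := h (v + s₂ • w) (by rw [hβ, z2])
    rw [hα] at a1 a2
    have c1 : 0 ≤ (s₂ - s₁) * (a v - s₁ * s₂ * a w) := by
      have := add_nonneg (mul_nonneg p2.le a1) (mul_nonneg (neg_pos.mpr n1).le a2)
      nlinarith
    have c2 : 0 ≤ a v - s₁ * s₂ * a w := nonneg_of_mul_nonneg_right c1 (by linarith)
    have := mul_nonneg c2 (neg_pos.mpr hw).le
    rw [← hprod]
    linarith
  obtain ⟨t, ht1, ht2⟩ := exists_between_of_forall_le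
    (s := {x : ℝ | ∃ v, 0 < b v ∧ x = - a v / b v})
    (t := {x : ℝ | ∃ w, b w < 0 ∧ x = - a w / b w})
    ⟨_, v₁, h₁, rfl⟩ ⟨_, v₂, h₂, rfl⟩ (by
      rintro _ ⟨v, hv, rfl⟩ _ ⟨w, hw, rfl⟩
      have := key v w hv hw
      rw [div_le_iff₀ hv, div_mul_eq_mul_div, le_div_iff_of_neg hw]
      linarith)
  refine ⟨t, fun v => ?_⟩
  rcases lt_trichotomy (b v) 0 with hv | hv | hv
  · have := ht2 ⟨v, hv, rfl⟩
    rw [le_div_iff_of_neg hv] at this; linarith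
  · simpa [hv] using h v hv
  · have := ht1 ⟨v, hv, rfl⟩
    rw [div_le_iff₀ hv] at this; linarith

theorem hodge_quad (s : Fin 6 → ℝ) :
    hodgeStar *ᵥ s ⬝ᵥ s = 2 * (s 0 * s 5 - s 1 * s 4 + s 2 * s 3) := by
  simp [hodgeStar, dotProduct, mulVec, Fin.sum_univ_succ, vecHead]
  ring

theorem hodge_wedge (X Y : Fin 4 → ℝ) :
    hodgeStar *ᵥ wedge X Y ⬝ᵥ wedge X Y = 0 := by
  rw [hodge_quad]; simp [wedge]; ring

theorem plucker (s : Fin 6 → ℝ) (h : hodgeStar *ᵥ s ⬝ᵥ s = 0) :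
    ∃ X Y, wedge X Y = s := by
  rw [hodge_quad] at h
  have h : s 0 * s 5 - s 1 * s 4 + s 2 * s 3 = 0 := by linarith
  by_cases h0 : s 0 = 0
  · by_cases h1 : s 1 = 0
    · by_cases h2 : s 2 = 0
      · -- vectors orthogonal to `e₀`: any 2-vector in dimension three is decomposable
        by_cases h3 : s 3 = 0
        · refine ⟨![0, s 4, s 5, 0], ![0, 0, 0, 1], ?_⟩
          ext i; fin_cases i <;> simp [wedge, h0, h1, h2, h3]
        · refine ⟨![0, 1, 0, -s 5 / s 3], ![0, 0, s 3, s 4], ?_⟩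
          ext i; fin_cases i <;> simp [wedge, h0, h1, h2]
          field_simp
      · refine ⟨![1, s 4 / s 2, s 5 / s 2, 0], ![s 0 * 0, s 0, s 1, s 2], ?_⟩
        have h3 : s 3 = 0 := by simpa [h0, h1, h2] using h
        ext i; fin_cases i <;> simp [wedge, h0, h1, h3] <;> field_simp
    · refine ⟨![1, s 3 / s 1, 0, -s 5 / s 1], ![0, s 0, s 1, s 2], ?_⟩
      ext i; fin_cases i <;> simp [wedge, h0] <;> field_simp
      linear_combination h - s 5 * h0
  · refine ⟨![1, 0, -s 3 / s 0, -s 4 / s 0], ![0, s 0, s 1, s 2], ?_⟩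
    ext i; fin_cases i <;> simp [wedge] <;> field_simp
    linear_combination -h

theorem wedge_smul (c : ℝ) (X Y : Fin 4 → ℝ) : wedge (c • X) Y = c • wedge X Y := by
  ext i; fin_cases i <;> simp [wedge] <;> ring

theorem secNonneg_all {R : Matrix (Fin 6) (Fin 6) ℝ} (h : SecNonneg R) (s : Fin 6 → ℝ)
    (hs : hodgeStar *ᵥ s ⬝ᵥ s = 0) : 0 ≤ R *ᵥ s ⬝ᵥ s := by
  by_cases h0 : s = 0
  · simp [h0]
  have hpos : 0 < s ⬝ᵥ s := by
    have h1 : 0 ≤ s ⬝ᵥ s := Finset.sum_nonneg fun i _ => mul_self_nonneg _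
    exact lt_of_le_of_ne h1 fun e => h0 (dotProduct_self_eq_zero.mp e.symm)
  obtain ⟨X, Y, rfl⟩ := plucker s hs
  set s := wedge X Y
  set c := (Real.sqrt (s ⬝ᵥ s))⁻¹ with hc
  have hc2 : c * c = (s ⬝ᵥ s)⁻¹ := by
    rw [hc, ← mul_inv, Real.mul_self_sqrt hpos.le]
  have := h (c • X) Y (by
    rw [wedge_smul, smul_dotProduct, dotProduct_smul, smul_eq_mul, smul_eq_mul, ← mul_assoc, hc2]
    exact inv_mul_cancel₀ hpos.ne')
  rw [wedge_smul, mulVec_smul, smul_dotProduct, dotProduct_smul, smul_eq_mul, smul_eq_mul,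
    ← mul_assoc, hc2] at this
  exact nonneg_of_mul_nonneg_right this (inv_pos.mpr hpos)

theorem quad_expand (A : Matrix (Fin 6) (Fin 6) ℝ) (v w : Fin 6 → ℝ) :
    ∃ α, ∀ s : ℝ, A *ᵥ (v + s • w) ⬝ᵥ (v + s • w)
      = A *ᵥ v ⬝ᵥ v + s * α + s ^ 2 * (A *ᵥ w ⬝ᵥ w) := by
  refine ⟨A *ᵥ v ⬝ᵥ w + A *ᵥ w ⬝ᵥ v, fun s => ?_⟩
  simp only [mulVec_add, mulVec_smul, add_dotProduct, dotProduct_add, smul_dotProduct,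
    dotProduct_smul, smul_eq_mul]
  ring

theorem hodge_symm : hodgeStarᵀ = hodgeStar := by
  ext i j; fin_cases i <;> fin_cases j <;> rfl

theorem finsler {R : Matrix (Fin 6) (Fin 6) ℝ} (hR : R.IsSymm) (h : SecNonneg R) :
    ∃ x : ℝ, (R + x • hodgeStar).PosSemidef := by
  obtain ⟨t, ht⟩ := s_lemma_aux (fun s => R *ᵥ s ⬝ᵥ s) (fun s => hodgeStar *ᵥ s ⬝ᵥ s)
    (quad_expand R) (quad_expand hodgeStar) (secNonneg_all h)
    ![1, 0, 0, 0, 0, 1] ![1, 0, 0, 0, 0, -1]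
    (by rw [hodge_quad]; simp) (by rw [hodge_quad]; simp)
  refine ⟨t, Matrix.PosSemidef.of_dotProduct_mulVec_nonneg ?_ fun v => ?_⟩
  · rw [Matrix.IsHermitian, conjTranspose_eq_transpose_of_trivial, transpose_add,
      transpose_smul, hodge_symm, hR.eq]
  · have := ht v
    rw [star_trivial, add_mulVec, smul_mulVec, dotProduct_add, dotProduct_smul, smul_eq_mul,
      dotProduct_comm, dotProduct_comm v]
    exact this

theorem part_one (R : Matrix (Fin 6) (Fin 6) ℝ)
    (hsymm : R.IsSymm) (hnpos : ¬ SecPos R)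
    (x₀ : ℝ) (hx₀ : (R + x₀ • hodgeStar).PosSemidef) :
    (Polynomial.X - Polynomial.C x₀) ^ 2 ∣ detPencil R := by
  simp only [SecPos, not_forall, not_lt] at hnpos
  obtain ⟨X, Y, hu, hle⟩ := hnpos
  have hw := hodge_wedge X Y
  set s := wedge X Y
  have hz : (R + x₀ • hodgeStar) *ᵥ s = 0 := by
    rw [← hx₀.dotProduct_mulVec_zero_iff]
    refine le_antisymm ?_ (hx₀.dotProduct_mulVec_nonneg s)
    rw [star_trivial, dotProduct_comm, add_mulVec, smul_mulVec, add_dotProduct, smul_dotProduct,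
      hw]
    simpa using hle
  obtain ⟨i, hi⟩ : ∃ i, s i ≠ 0 := by
    by_contra! hh
    have : s = 0 := funext hh
    simp [this] at hu
  have := sq_dvd_det_aux (R.map Polynomial.C + (Polynomial.X : Polynomial ℝ) •
    hodgeStar.map Polynomial.C) (by
      rw [transpose_add, transpose_smul, ← transpose_map, ← transpose_map, hodge_symm, hsymm.eq])
    (fun j => Polynomial.C (s j)) (fun j => Polynomial.C ((hodgeStar *ᵥ s) j))
    (Polynomial.X - Polynomial.C x₀) (by
      ext1 j
      have hj := congrFun hz j
      rw [add_mulVec, smul_mulVec] at hj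
      have e : ∀ A : Matrix (Fin 6) (Fin 6) ℝ,
          (A.map Polynomial.C *ᵥ fun j => Polynomial.C (s j)) j = Polynomial.C ((A *ᵥ s) j) := by
        intro A; simp [mulVec, dotProduct]
      have hR : (R *ᵥ s) j = - (x₀ * (hodgeStar *ᵥ s) j) := by
        simp only [Pi.add_apply, Pi.smul_apply, smul_eq_mul, Pi.zero_apply] at hj
        linarith
      rw [add_mulVec, smul_mulVec, Pi.add_apply, Pi.smul_apply, e, e, hR, Pi.smul_apply]
      simp only [smul_eq_mul, map_neg, map_mul]
      ring) (by
      rw [dotProduct_comm] at hw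
      simpa [dotProduct] using congrArg (Polynomial.C : ℝ → Polynomial ℝ) hw) i
  rw [← map_pow] at this
  exact ((Polynomial.isUnit_C.mpr (isUnit_iff_ne_zero.mpr (pow_ne_zero 2 hi))).dvd_mul_left).mp this

theorem hodge_sq : hodgeStar * hodgeStar = 1 := by
  ext i j; fin_cases i <;> fin_cases j <;>
    simp [hodgeStar, Matrix.mul_apply, Fin.sum_univ_succ]

theorem detPencil_ne_zero (R : Matrix (Fin 6) (Fin 6) ℝ) : detPencil R ≠ 0 := by
  have h : detPencil R * (hodgeStar.map Polynomial.C).det = (-(R * hodgeStar)).charpoly := by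
    rw [detPencil, ← det_mul, Matrix.charpoly, Matrix.charmatrix, add_mul, smul_mul,
      ← Matrix.map_mul, ← Matrix.map_mul, hodge_sq]
    generalize R * hodgeStar = B
    congr 1
    ext i j : 2
    simp [Matrix.one_apply, Matrix.diagonal_apply]
    split_ifs <;> simp [add_comm]
  intro h0
  rw [h0, zero_mul] at h
  exact (Matrix.charpoly_monic _).ne_zero h.symm

theorem disc_eq_zero (p : Polynomial ℂ) (hp : p ≠ 0) (z : ℂ)
    (h : (Polynomial.X - Polynomial.C z) ^ 2 ∣ p) : disc p = 0 := by
  have h2 : 2 ≤ p.roots.toList.count z := by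
    rw [← Multiset.coe_count, Multiset.coe_toList, Polynomial.count_roots]
    exact (Polynomial.le_rootMultiplicity_iff hp).mpr h
  have hnd : ¬ p.roots.toList.Nodup := fun hh => by
    have := List.nodup_iff_count_le_one.mp hh z; omega
  rw [List.nodup_iff_injective_get, Function.Injective] at hnd
  push Not at hnd
  obtain ⟨i, j, hij, hne⟩ := hnd
  have : ∃ i j : Fin p.roots.toList.length, i < j ∧
      p.roots.toList.get i = p.roots.toList.get j := by
    rcases lt_or_gt_of_ne hne with hl | hl
    · exact ⟨i, j, hl, hij⟩
    · exact ⟨j, i, hl, hij.symm⟩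
  obtain ⟨i, j, hl, he⟩ := this
  rw [disc, Finset.prod_eq_zero (i := (i, j)) (by simpa using hl) (by
    simp only [he, sub_self]; simp), mul_zero]

theorem quad_continuous :
    Continuous fun q : CurvOp × (Fin 6 → ℝ) => q.1.1 *ᵥ q.2 ⬝ᵥ q.2 := by
  fun_prop

theorem isClosed_secNonneg : IsClosed {M : CurvOp | SecNonneg M.1} := by
  simp only [SecNonneg, Set.ofPred_forall]
  refine isClosed_iInter fun X => isClosed_iInter fun Y => isClosed_iInter fun _ => ?_
  exact isClosed_le continuous_const
    (quad_continuous.comp (continuous_id.prodMk continuous_const))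

theorem isCompact_decomp :
    IsCompact {s : Fin 6 → ℝ | s ⬝ᵥ s = 1 ∧ hodgeStar *ᵥ s ⬝ᵥ s = 0} := by
  refine Metric.isCompact_of_isClosed_isBounded ?_ ?_
  · exact (isClosed_eq (by fun_prop) continuous_const).inter
      (isClosed_eq (by fun_prop) continuous_const)
  · refine (Metric.isBounded_closedBall (x := (0 : Fin 6 → ℝ)) (r := 1)).subset ?_
    rintro s ⟨hs, -⟩
    rw [mem_closedBall_zero_iff, pi_norm_le_iff_of_nonneg zero_le_one]
    intro i
    have : s i * s i ≤ s ⬝ᵥ s :=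
      Finset.single_le_sum (f := fun i => s i * s i) (fun i _ => mul_self_nonneg _)
        (Finset.mem_univ i)
    rw [Real.norm_eq_abs]
    exact abs_le_one_iff_mul_self_le_one.mpr (by linarith)

theorem frontier_not_pos (R' : CurvOp) (h : R' ∈ frontier {M : CurvOp | SecNonneg M.1}) :
    SecNonneg R'.1 ∧ ¬ SecPos R'.1 := by
  refine ⟨isClosed_secNonneg.frontier_subset h, fun hp => h.2 ?_⟩
  rw [mem_interior_iff_mem_nhds]
  have := isCompact_decomp.eventually_forall_of_forall_eventually (x₀ := R')
    (P := fun M s => 0 < M.1 *ᵥ s ⬝ᵥ s) (by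
      rintro s ⟨hs1, hs2⟩
      obtain ⟨X, Y, rfl⟩ := plucker s hs2
      exact quad_continuous.continuousAt.eventually (lt_mem_nhds (hp X Y hs1)))
  filter_upwards [this] with M hM X Y hXY
  exact (hM _ ⟨hXY, hodge_wedge X Y⟩).le

/-- If `R ∈ Sym²_b(∧²ℝ⁴)` has `sec_R ≥ 0` but not `sec_R > 0` and `R + x₀ * ⪰ 0`,
then `x₀` is a root of multiplicity at least `2` of `x ↦ det(R + x *)`.  In particular,
the discriminant `disc_x det(R + x *)` vanishes on the topological boundary of
`{R ∈ Sym²_b(∧²ℝ⁴) : sec_R ≥ 0}`. -/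
theorem boundary_root_multiplicity (R : Matrix (Fin 6) (Fin 6) ℝ)
    (hsymm : R.IsSymm) (hb : Bianchi R)
    (hsec : SecNonneg R) (hnpos : ¬ SecPos R)
    (x₀ : ℝ) (hx₀ : (R + x₀ • hodgeStar).PosSemidef) :
    (Polynomial.X - Polynomial.C x₀) ^ 2 ∣ detPencil R ∧
    ∀ R' : CurvOp, R' ∈ frontier {M : CurvOp | SecNonneg M.1} →
      disc ((detPencil R'.1).map (algebraMap ℝ ℂ)) = 0 := by
  refine ⟨part_one R hsymm hnpos x₀ hx₀, fun R' hR' => ?_⟩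
  obtain ⟨hn, hp⟩ := frontier_not_pos R' hR'
  obtain ⟨x, hx⟩ := finsler R'.2.1 hn
  have hd := part_one R'.1 R'.2.1 hp x hx
  refine disc_eq_zero _ ?_ (x : ℂ) ?_
  · exact (Polynomial.map_ne_zero_iff (algebraMap ℝ ℂ).injective).mpr (detPencil_ne_zero _)
  · simpa using Polynomial.map_dvd (algebraMap ℝ ℂ) hd
end

section
/- For every complex symmetric n×n matrix A there exist eigenvalues λ₁,…,λ_ℓ ∈ ℂ of A and positive integers k₁,…,k_ℓ with k₁+…+k_ℓ = n such that the O(n,ℂ)-orbit of A (under A ↦ SASᵗ) contains the block diagonal matrix with blocks M_{kᵢ}(λᵢ), where M_k(λ) = λ·Id_k + R_k Λ_k R_kᵗ; moreover the characteristic polynomial of A equals ∏ᵢ (λᵢ − t)^{kᵢ}, and det(M_k(λ) − t·Id_k) = (λ − t)^k. -/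
open Matrix Polynomial

/-- The `k × k` antidiagonal matrix `Δ_k`. -/
noncomputable def Delta (k : ℕ) : Matrix (Fin k) (Fin k) ℂ :=
  Matrix.of fun i j => if (i : ℕ) + (j : ℕ) = k - 1 then 1 else 0

/-- The symmetric `k × k` matrix `Λ_k` with `1`'s on the shifted antidiagonal
(positions `i + j = k`, zero-indexed) and zeros elsewhere; `Λ₁ = 0`. -/
noncomputable def Lam (k : ℕ) : Matrix (Fin k) (Fin k) ℂ :=
  Matrix.of fun i j => if (i : ℕ) + (j : ℕ) = k then 1 else 0

/-- The canonical block `M_k(λ) = λ·Id + R_k Λ_k R_kᵗ`. -/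
noncomputable def Mblock {k : ℕ} (Rk : Matrix (Fin k) (Fin k) ℂ) (μ : ℂ) :
    Matrix (Fin k) (Fin k) ℂ := μ • (1 : Matrix (Fin k) (Fin k) ℂ) + Rk * Lam k * Rkᵀ

section helper
variable {V : Type} [AddCommGroup V] [Module ℂ V]

theorem sa_pow (B : V →ₗ[ℂ] V →ₗ[ℂ] ℂ) (N : Module.End ℂ V)
    (hN : ∀ x y, B (N x) y = B x (N y)) (j : ℕ) (x y : V) :
    B ((N ^ j) x) y = B x ((N ^ j) y) := by
  induction j generalizing x y with
  | zero => simp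
  | succ j ih =>
    rw [pow_succ, Module.End.mul_apply, ih, hN, ← Module.End.mul_apply, ← pow_succ', pow_succ]

theorem pow_vanish (N : Module.End ℂ V) {k : ℕ} {x : V} (h : (N ^ k) x = 0) {j : ℕ} (hj : k ≤ j) :
    (N ^ j) x = 0 := by
  obtain ⟨m, rfl⟩ := Nat.exists_eq_add_of_le' hj
  rw [pow_add, Module.End.mul_apply, h, map_zero]

theorem exists_start [FiniteDimensional ℂ V] [Nontrivial V] (B : V →ₗ[ℂ] V →ₗ[ℂ] ℂ)
    (hs : ∀ x y, B x y = B y x) (hnd : ∀ x, (∀ y, B x y = 0) → x = 0)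
    (T : Module.End ℂ V) (hT : ∀ x y, B (T x) y = B x (T y)) :
    ∃ (μ : ℂ) (N : Module.End ℂ V) (k : ℕ) (x : V), (∀ x, T x = μ • x + N x) ∧
      (∀ x y, B (N x) y = B x (N y)) ∧ (N ^ (k + 1)) x = 0 ∧ B ((N ^ k) x) x ≠ 0 := by
  obtain ⟨μ, hμ⟩ := Module.End.exists_eigenvalue T
  obtain ⟨w, hw⟩ := hμ.exists_hasEigenvector
  let N : Module.End ℂ V := T - μ • 1
  have hNw : N w = 0 := by simp [N, hw.apply_eq_smul]
  have hN : ∀ x y, B (N x) y = B x (N y) := by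
    intro x y; simp [N, hT]
  obtain ⟨d, hd1, hd⟩ := ((Filter.eventually_ge_atTop 1).and
    (LinearMap.eventually_isCompl_ker_pow_range_pow N)).exists
  have hex : ∃ k, ∀ x, (N ^ d) x = 0 → (N ^ k) x = 0 := ⟨d, fun x h => h⟩
  classical
  obtain ⟨k, hk, hmin⟩ : ∃ k, (∀ x, (N ^ d) x = 0 → (N ^ k) x = 0) ∧
      ∀ m < k, ¬ ∀ x, (N ^ d) x = 0 → (N ^ m) x = 0 :=
    ⟨Nat.find hex, Nat.find_spec hex, fun m hm => Nat.find_min hex hm⟩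
  obtain _ | k := k
  · exfalso
    apply hw.2
    simpa using hk w (pow_vanish N (k := 1) (by simpa using hNw) hd1)
  have := hmin k (by omega)
  push Not at this
  obtain ⟨y, hy, hy'⟩ := this
  obtain ⟨z, hz⟩ : ∃ z, B ((N ^ k) y) z ≠ 0 := by
    by_contra! h
    exact hy' (hnd _ h)
  have hzt : z ∈ LinearMap.ker (N ^ d) ⊔ LinearMap.range (N ^ d) := by
    rw [hd.sup_eq_top]; trivial
  obtain ⟨z1, hz1, z2, ⟨u, rfl⟩, rfl⟩ := Submodule.mem_sup.1 hzt
  have hz1' : (N ^ d) z1 = 0 := hz1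
  have hz2 : B ((N ^ k) y) z1 ≠ 0 := by
    intro h
    apply hz
    rw [map_add, h, ← sa_pow B N hN, ← Module.End.mul_apply, ← pow_add,
      pow_vanish N hy (by omega)]
    simp
  have key : ∃ x, (N ^ d) x = 0 ∧ B ((N ^ k) x) x ≠ 0 := by
    by_contra! h
    have h1 := h y hy
    have h2 := h z1 hz1'
    have h3 := h (y + z1) (by simp [hy, hz1'])
    have h4 : B ((N ^ k) z1) y = B ((N ^ k) y) z1 := by rw [sa_pow B N hN, hs]
    simp only [map_add, LinearMap.add_apply, h1, h2, h4] at h3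
    apply hz2
    linear_combination h3 / 2
  obtain ⟨x, hx, hx'⟩ := key
  exact ⟨μ, N, k, x, fun x => by simp [N], hN, hk x hx, hx'⟩

theorem exists_adjust (B : V →ₗ[ℂ] V →ₗ[ℂ] ℂ) (N : Module.End ℂ V)
    (hN : ∀ x y, B (N x) y = B x (N y)) (k : ℕ) (x : V) (hx : (N ^ (k + 1)) x = 0)
    (hx' : B ((N ^ k) x) x ≠ 0) (m : ℕ) :
    ∃ v, (N ^ (k + 1)) v = 0 ∧ B ((N ^ k) v) v = 1 ∧
      ∀ j, j < k → k ≤ j + m → B ((N ^ j) v) v = 0 := by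
  induction m with
  | zero =>
    obtain ⟨c, hc⟩ := IsAlgClosed.exists_pow_nat_eq (B ((N ^ k) x) x) (n := 2) (by norm_num)
    have hc0 : c ≠ 0 := by rintro rfl; apply hx'; simp [← hc]
    refine ⟨c⁻¹ • x, by simp [hx], ?_, fun j h1 h2 => by omega⟩
    simp only [map_smul, LinearMap.smul_apply, smul_eq_mul, ← hc]
    field_simp
  | succ m ih =>
    obtain ⟨v, h0, h1, h2⟩ := ih
    by_cases hm : k < m + 1
    · exact ⟨v, h0, h1, fun j hj hj' => h2 j hj (by omega)⟩
    have hexp : ∀ (a : ℂ) (j : ℕ), B ((N ^ j) (v + a • (N ^ (m+1)) v)) (v + a • (N ^ (m+1)) v) =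
        B ((N ^ j) v) v + 2 * a * B ((N ^ (j + (m + 1))) v) v
          + a ^ 2 * B ((N ^ (j + (m+1) + (m+1))) v) v := by
      intro a j
      simp only [map_add, map_smul, LinearMap.add_apply, LinearMap.smul_apply, smul_eq_mul,
        ← sa_pow B N hN (m+1), ← Module.End.mul_apply, ← pow_add]
      rw [show m + 1 + j = j + (m+1) by ring, show m + 1 + (j + (m+1)) = j + (m+1) + (m+1) by ring]
      ring
    have hz : ∀ j, k + 1 ≤ j → B ((N ^ j) v) v = 0 := by
      intro j hj; rw [pow_vanish N h0 hj]; simp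
    obtain ⟨a, ha⟩ : ∃ a : ℂ, a = - B ((N ^ (k - (m+1))) v) v / 2 := ⟨_, rfl⟩
    refine ⟨v + a • (N ^ (m+1)) v, ?_, ?_, ?_⟩
    · rw [map_add, map_smul, h0, ← Module.End.mul_apply, ← pow_add, pow_vanish N h0 (by omega)]
      simp
    · rw [hexp, h1, hz _ (by omega), hz _ (by omega)]; ring
    · intro j hj hj'
      rw [hexp, hz (j + (m+1) + (m+1)) (by omega)]
      rcases Nat.eq_or_lt_of_le hj' with h | h
      · rw [← h, h1, ha, show k - (m+1) = j by omega]; ring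
      · rw [h2 j hj (by omega), hz _ (by omega)]; ring

theorem exists_chain [FiniteDimensional ℂ V] [Nontrivial V] (B : V →ₗ[ℂ] V →ₗ[ℂ] ℂ)
    (hs : ∀ x y, B x y = B y x) (hnd : ∀ x, (∀ y, B x y = 0) → x = 0)
    (T : Module.End ℂ V) (hT : ∀ x y, B (T x) y = B x (T y)) :
    ∃ (μ : ℂ) (N : Module.End ℂ V) (k : ℕ) (x : V), (∀ x, T x = μ • x + N x) ∧
      (∀ x y, B (N x) y = B x (N y)) ∧ (N ^ (k + 1)) x = 0 ∧
      ∀ j, B ((N ^ j) x) x = if j = k then 1 else 0 := by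
  obtain ⟨μ, N, k, x, h1, h2, h3, h4⟩ := exists_start B hs hnd T hT
  obtain ⟨v, g1, g2, g3⟩ := exists_adjust B N h2 k x h3 h4 k
  refine ⟨μ, N, k, v, h1, h2, g1, fun j => ?_⟩
  split_ifs with h
  · rw [h, g2]
  · rcases lt_or_gt_of_ne h with h | h
    · exact g3 j h (by omega)
    · rw [pow_vanish N g1 h]; simp

theorem main_ind (d : ℕ) : ∀ (V : Type) [AddCommGroup V] [Module ℂ V] [FiniteDimensional ℂ V]
    (B : V →ₗ[ℂ] V →ₗ[ℂ] ℂ)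
    (_ : ∀ x y, B x y = B y x) (_ : ∀ x, (∀ y, B x y = 0) → x = 0)
    (T : Module.End ℂ V) (_ : ∀ x y, B (T x) y = B x (T y)) (_ : Module.finrank ℂ V = d),
    ∃ (ℓ : ℕ) (lam : Fin ℓ → ℂ) (k : Fin ℓ → ℕ) (b : Fin ℓ → ℕ → V),
      (∀ i, 0 < k i) ∧ (∑ i, k i = d) ∧
      (∀ i j r s, r < k i → s < k j → B (b i r) (b j s) =
        if i = j then (if r + s = k i - 1 then 1 else 0) else 0) ∧
      (∀ i j r s, r < k i → s < k j → B (T (b i r)) (b j s) =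
        if i = j then (lam i * (if r + s = k i - 1 then 1 else 0) + 
          (if r + s = k i then 1 else 0)) else 0) := by
  induction d using Nat.strong_induction_on with
  | _ d ih =>
  intro V _ _ _ B hs hnd T hT hd
  rcases subsingleton_or_nontrivial V with hV | hV
  · refine ⟨0, Fin.elim0, Fin.elim0, Fin.elim0, fun i => i.elim0, ?_, fun i => i.elim0,
      fun i => i.elim0⟩
    rw [← hd, Module.finrank_zero_of_subsingleton]; simp
  obtain ⟨μ, N, k, v, h1, h2, h3, h4⟩ := exists_chain B hs hnd T hT
  have hB : ∀ i j, B ((N ^ i) v) ((N ^ j) v) = if i + j = k then 1 else 0 := by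
    intro i j
    rw [← sa_pow B N h2, ← Module.End.mul_apply, ← pow_add, h4, add_comm]
  let φ : V →ₗ[ℂ] (Fin (k+1) → ℂ) := LinearMap.pi fun i => B ((N ^ (i:ℕ)) v)
  let U : Submodule ℂ V := LinearMap.ker φ
  have hU : ∀ x, x ∈ U ↔ ∀ i, B ((N ^ i) v) x = 0 := by
    intro x
    simp only [U, LinearMap.mem_ker, φ, funext_iff, LinearMap.pi_apply, Pi.zero_apply]
    constructor
    · intro h i
      by_cases hi : i < k + 1
      · exact h ⟨i, hi⟩
      · rw [pow_vanish N h3 (by omega)]; simp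
    · exact fun h i => h i
  have hφ : ∀ c : Fin (k+1) → ℂ, φ (∑ i, c i • (N ^ (k - (i:ℕ))) v) = c := by
    intro c
    ext j
    simp only [φ, LinearMap.pi_apply, map_sum, map_smul, hB, smul_eq_mul]
    rw [Finset.sum_eq_single j]
    · rw [if_pos (by omega), mul_one]
    · intro i _ hi
      rw [if_neg, mul_zero]
      intro h; apply hi; ext; omega
    · simp
  have hrank : k + 1 + Module.finrank ℂ U = d := by
    have := LinearMap.finrank_range_add_finrank_ker φ
    rw [LinearMap.range_eq_top.2 (fun c => ⟨_, hφ c⟩), finrank_top, Module.finrank_fin_fun] at this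
    rw [← hd]; exact this
  have hNU : ∀ x ∈ U, T x ∈ U := by
    intro x hx
    rw [hU] at hx ⊢
    intro i
    rw [h1, map_add, map_smul, hx, ← h2, ← Module.End.mul_apply, ← pow_succ', hx]; simp
  obtain ⟨ℓ, lam, kk, b, g1, g2, g3, g4⟩ := ih (Module.finrank ℂ U) (by omega) U
    ((B.compl₂ U.subtype).comp U.subtype) (fun x y => by simpa using hs _ _)
    (by
      intro x hx
      ext
      apply hnd
      intro y
      have hy : y - ∑ i, φ y i • (N ^ (k - (i:ℕ))) v ∈ U := by
        rw [LinearMap.mem_ker, map_sub, hφ, sub_self]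
      have := hx ⟨_, hy⟩
      simp only [LinearMap.comp_apply, LinearMap.compl₂_apply, Submodule.subtype_apply, map_sub,
        map_sum, map_smul] at this
      rw [sub_eq_zero] at this
      rw [this]
      apply Finset.sum_eq_zero
      intro i _
      rw [hs, (hU _).1 x.2]; simp)
    (T.restrict hNU) (fun x y => by simpa using hT _ _) rfl
  refine ⟨ℓ + 1, Fin.cons μ lam, Fin.cons (k+1) kk,
    Fin.cons (fun r => (N ^ (k - r)) v) (fun i r => (b i r : V)), ?_, ?_, ?_, ?_⟩
  · intro i; refine Fin.cases ?_ (fun i => ?_) i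
    · simp
    · simpa using g1 i
  · rw [Fin.sum_univ_succ]; simpa [g2] using hrank
  · intro i j r s
    refine Fin.cases ?_ (fun i => ?_) i <;> refine Fin.cases ?_ (fun j => ?_) j
    · simp only [Fin.cons_zero, hB, if_true]
      intro hr hs
      congr 1
      apply propext; omega
    · intro _ _
      simpa [(Fin.succ_ne_zero j).symm] using (hU _).1 (b j s).2 _
    · intro _ _
      simp only [Fin.cons_zero, Fin.cons_succ, Fin.succ_ne_zero, if_false]
      rw [hs]; exact (hU _).1 (b i r).2 _
    · simpa using g3 i j r s
  · intro i j r s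
    refine Fin.cases ?_ (fun i => ?_) i <;> refine Fin.cases ?_ (fun j => ?_) j
    · simp only [Fin.cons_zero, if_true, h1, map_add, map_smul, LinearMap.add_apply,
        LinearMap.smul_apply, ← Module.End.mul_apply, ← pow_succ', hB, smul_eq_mul]
      intro hr hs
      congr 2
      · congr 1
        apply propext; omega
      · apply propext; omega
    · intro _ _
      rw [hT]
      simpa [(Fin.succ_ne_zero j).symm] using (hU _).1 (hNU _ (b j s).2) _
    · intro _ _
      simp only [Fin.cons_zero, Fin.cons_succ, Fin.succ_ne_zero, if_false]
      rw [hs]; exact (hU _).1 (hNU _ (b i r).2) _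
    · simpa using g4 i j r s
end helper

theorem Delta_mul_Delta (k : ℕ) : Delta k * Delta k = 1 := by
  ext i j
  rw [Matrix.mul_apply, Finset.sum_eq_single (Fin.rev i)]
  · simp only [Delta, Matrix.of_apply, Fin.val_rev, Matrix.one_apply, Fin.ext_iff]
    rw [if_pos (by omega), one_mul]
    congr 1
    apply propext; omega
  · intro b _ hb
    simp only [Delta, Matrix.of_apply]
    rw [if_neg, zero_mul]
    intro h; apply hb; ext; rw [Fin.val_rev]; omega
  · simp

theorem Delta_mul_Lam (k : ℕ) (i j : Fin k) :
    (Delta k * Lam k) i j = if (j : ℕ) = i + 1 then 1 else 0 := by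
  rw [Matrix.mul_apply, Finset.sum_eq_single (Fin.rev i)]
  · simp only [Delta, Lam, Matrix.of_apply, Fin.val_rev]
    rw [if_pos (by omega), one_mul]
    congr 1
    apply propext; omega
  · intro b _ hb
    simp only [Delta, Matrix.of_apply]
    rw [if_neg, zero_mul]
    intro h; apply hb; ext; rw [Fin.val_rev]; omega
  · simp

theorem Mblock_eq {k : ℕ} (R : Matrix (Fin k) (Fin k) ℂ) (hR : R * Delta k * Rᵀ = 1) (μ : ℂ) :
    Mblock R μ = R * (μ • Delta k + Lam k) * Rᵀ := by
  rw [Mblock, ← hR]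
  simp [Matrix.mul_add, Matrix.add_mul]

theorem Mblock_charpoly {k : ℕ} (R : Matrix (Fin k) (Fin k) ℂ) (hR : R * Delta k * Rᵀ = 1)
    (μ : ℂ) : (Mblock R μ).charpoly = (Polynomial.X - Polynomial.C μ) ^ k := by
  have h1 : Rᵀ * R = Delta k := by
    rw [Matrix.mul_assoc] at hR
    have h := mul_eq_one_comm.1 hR
    calc Rᵀ * R = Delta k * Delta k * (Rᵀ * R) := by rw [Delta_mul_Delta, Matrix.one_mul]
      _ = Delta k * (Delta k * Rᵀ * R) := by simp only [Matrix.mul_assoc]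
      _ = Delta k := by rw [h, Matrix.mul_one]
  rw [Mblock_eq R hR, Matrix.mul_assoc, Matrix.charpoly_mul_comm, Matrix.mul_assoc, h1,
    Matrix.charpoly_mul_comm, Matrix.mul_add, Matrix.mul_smul, Delta_mul_Delta,
    Matrix.charpoly_of_isUpperTriangular]
  · have : ∀ i : Fin k, (μ • (1 : Matrix (Fin k) (Fin k) ℂ) + Delta k * Lam k) i i = μ := by
      intro i
      rw [Matrix.add_apply, Delta_mul_Lam]; simp
    simp [this, -Matrix.add_apply]
  · intro i j hij
    have hij' : j < i := hij
    rw [Matrix.add_apply, Delta_mul_Lam, if_neg (by have := Fin.lt_def.1 hij'; omega)]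
    simp [Matrix.one_apply, hij'.ne']

theorem charpoly_blockDiag {ℓ : ℕ} (k : Fin ℓ → ℕ) (hk : ∀ i, 0 < k i)
    (M : ∀ i, Matrix (Fin (k i)) (Fin (k i)) ℂ) :
    (Matrix.blockDiagonal' M).charpoly = ∏ i, (M i).charpoly := by
  rw [(Matrix.blockTriangular_blockDiagonal' M).charpoly]
  have : Finset.image (Sigma.fst : (Σ i, Fin (k i)) → Fin ℓ) Finset.univ = Finset.univ := by
    ext i
    simp only [Finset.mem_image, Finset.mem_univ, true_and, iff_true]
    exact ⟨⟨i, ⟨0, hk i⟩⟩, rfl⟩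
  rw [this]
  refine Finset.prod_congr rfl fun i _ => ?_
  let f : {s : (Σ i, Fin (k i)) // s.1 = i} ≃ Fin (k i) := Equiv.sigmaSubtype i
  rw [← Matrix.charpoly_reindex f.symm (M i)]
  congr 1
  ext ⟨⟨a, x⟩, ha⟩ ⟨⟨b, y⟩, hb⟩
  simp only at ha hb
  subst ha
  subst hb
  simp [f, Matrix.toSquareBlock, Matrix.toSquareBlockProp, Equiv.sigmaSubtype]

/-- Canonical form for complex symmetric matrices under the congruence action of
`O(n,ℂ)`: the orbit of any symmetric `A` contains a block diagonal matrix with blocks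
`M_{kᵢ}(λᵢ)`, the `λᵢ` being eigenvalues of `A`, with
`charpoly(A) = ∏ (X - λᵢ)^{kᵢ}`; moreover `charpoly(M_k(λ)) = (X - λ)^k`. -/
theorem canonical_form (n : ℕ)
    (Rk : ∀ k : ℕ, Matrix (Fin k) (Fin k) ℂ)
    (hRk : ∀ k : ℕ, Rk k * Delta k * (Rk k)ᵀ = 1)
    (A : Matrix (Fin n) (Fin n) ℂ) (hA : A.IsSymm) :
    (∃ (ℓ : ℕ) (lam : Fin ℓ → ℂ) (k : Fin ℓ → ℕ),
      (∀ i, 0 < k i) ∧ (∑ i, k i = n) ∧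
      (∀ i, A.charpoly.IsRoot (lam i)) ∧
      A.charpoly = ∏ i, (Polynomial.X - Polynomial.C (lam i)) ^ (k i) ∧
      ∃ (S : Matrix (Fin n) (Fin n) ℂ) (e : (Σ i : Fin ℓ, Fin (k i)) ≃ Fin n),
        Sᵀ * S = 1 ∧
        S * A * Sᵀ = (Matrix.blockDiagonal'
          (fun i => Mblock (Rk (k i)) (lam i))).submatrix e.symm e.symm) ∧
    (∀ (k : ℕ) (μ : ℂ),
      (Mblock (Rk k) μ).charpoly = (Polynomial.X - Polynomial.C μ) ^ k) := by
  refine ⟨?_, fun k μ => Mblock_charpoly _ (hRk k) μ⟩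
  have hdot : ∀ x y : Fin n → ℂ, (A *ᵥ x) ⬝ᵥ y = x ⬝ᵥ (A *ᵥ y) := by
    intro x y
    rw [Matrix.dotProduct_mulVec, ← Matrix.mulVec_transpose, hA]
  obtain ⟨ℓ, lam, k, b, h1, h2, h3, h4⟩ := main_ind n (Fin n → ℂ) (dotProductBilin ℂ ℂ)
    (fun x y => dotProduct_comm x y) (fun x hx => dotProduct_eq_zero x hx)
    A.mulVecLin hdot (by simp)
  have h3' : ∀ i j r s, r < k i → s < k j → b i r ⬝ᵥ b j s =
      if i = j then (if r + s = k i - 1 then 1 else 0) else 0 := h3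
  have h4' : ∀ i j r s, r < k i → s < k j → (A *ᵥ b i r) ⬝ᵥ b j s =
      if i = j then (lam i * (if r + s = k i - 1 then 1 else 0) +
          (if r + s = k i then 1 else 0)) else 0 := h4
  let e : (Σ i : Fin ℓ, Fin (k i)) ≃ Fin n := Fintype.equivFinOfCardEq (by simp [h2])
  let P : Matrix (Σ i : Fin ℓ, Fin (k i)) (Fin n) ℂ := Matrix.of fun p => b p.1 p.2
  let D := Matrix.blockDiagonal' (fun i => Rk (k i))
  have hP : P * Pᵀ = Matrix.blockDiagonal' (fun i => Delta (k i)) := by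
    ext ⟨i, r⟩ ⟨j, s⟩
    have : (P * Pᵀ) ⟨i, r⟩ ⟨j, s⟩ = b i r ⬝ᵥ b j s := rfl
    rw [this, h3' i j r s r.2 s.2]
    by_cases h : i = j
    · subst h
      rw [Matrix.blockDiagonal'_apply_eq]; simp [Delta]
    · rw [Matrix.blockDiagonal'_apply_ne _ _ _ h, if_neg h]
  have hPA : P * A * Pᵀ = Matrix.blockDiagonal' (fun i => lam i • Delta (k i) + Lam (k i)) := by
    ext ⟨i, r⟩ ⟨j, s⟩
    have : (P * A * Pᵀ) ⟨i, r⟩ ⟨j, s⟩ = (b i r ᵥ* A) ⬝ᵥ b j s := rfl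
    rw [this, ← Matrix.mulVec_transpose, hA, h4' i j r s r.2 s.2]
    by_cases h : i = j
    · subst h
      rw [Matrix.blockDiagonal'_apply_eq]; simp [Delta, Lam]
    · rw [Matrix.blockDiagonal'_apply_ne _ _ _ h, if_neg h]
  have hS1 : (D * P) * (D * P)ᵀ = 1 := by
    calc (D * P) * (D * P)ᵀ = D * (P * Pᵀ) * Dᵀ := by
          rw [Matrix.transpose_mul]; simp only [Matrix.mul_assoc]
      _ = 1 := by
          rw [hP]
          simp only [D, Matrix.blockDiagonal'_transpose, ← Matrix.blockDiagonal'_mul, hRk]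
          exact Matrix.blockDiagonal'_one
  have hS2 : (D * P) * A * (D * P)ᵀ = Matrix.blockDiagonal' (fun i => Mblock (Rk (k i)) (lam i)) := by
    calc (D * P) * A * (D * P)ᵀ = D * (P * A * Pᵀ) * Dᵀ := by
          rw [Matrix.transpose_mul]; simp only [Matrix.mul_assoc]
      _ = _ := by
          rw [hPA]
          simp only [D, Matrix.blockDiagonal'_transpose, ← Matrix.blockDiagonal'_mul,
            Mblock_eq _ (hRk _)]
  let S : Matrix (Fin n) (Fin n) ℂ := (D * P).submatrix e.symm id
  have hSS : S * Sᵀ = 1 := by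
    have : S * Sᵀ = ((D * P) * (D * P)ᵀ).submatrix e.symm e.symm := rfl
    rw [this, hS1, Matrix.submatrix_one_equiv]
  have hSS' : Sᵀ * S = 1 := mul_eq_one_comm.1 hSS
  have hSA : S * A * Sᵀ = (Matrix.blockDiagonal'
      (fun i => Mblock (Rk (k i)) (lam i))).submatrix e.symm e.symm := by
    rw [← hS2]; rfl
  have hchar : A.charpoly = ∏ i, (Polynomial.X - Polynomial.C (lam i)) ^ (k i) := by
    have : A.charpoly = (S * A * Sᵀ).charpoly := by
      rw [Matrix.charpoly_mul_comm, ← Matrix.mul_assoc, hSS', Matrix.one_mul]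
    rw [this, hSA]
    have := Matrix.charpoly_reindex e
      (Matrix.blockDiagonal' (fun i => Mblock (Rk (k i)) (lam i)))
    rw [Matrix.reindex_apply] at this
    rw [this, charpoly_blockDiag k h1]
    exact Finset.prod_congr rfl fun i _ => Mblock_charpoly _ (hRk _) _
  refine ⟨ℓ, lam, k, h1, h2, fun i => ?_, hchar, S, e, hSS', hSA⟩
  rw [hchar, Polynomial.IsRoot, Polynomial.eval_prod]
  exact Finset.prod_eq_zero (Finset.mem_univ i) (by simp [(h1 i).ne'])
end

section
/- For all n ≥ 3, the discriminant polynomial disc: Sym²(ℂⁿ) → ℂ, sending a complex symmetric matrix A to the discriminant of its characteristic polynomial, is irreducible over ℂ. -/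
open Matrix

/-- Index set for the independent entries of a symmetric `n × n` matrix. -/
abbrev SymIdx (n : ℕ) := {p : Fin n × Fin n // p.1 ≤ p.2}

lemma exists_equiv_of_map_eq {m n : ℕ} (v : Fin m → ℂ) (r : Fin n → ℂ)
    (h : (Finset.univ : Finset (Fin m)).val.map v = (Finset.univ : Finset (Fin n)).val.map r) :
    ∃ e : Fin m ≃ Fin n, ∀ i, r (e i) = v i := by
  classical
  have key : ∀ c : ℂ, Nonempty ({a // v a = c} ≃ {b // r b = c}) := by
    intro c
    refine ⟨Fintype.equivOfCardEq ?_⟩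
    have := congrArg (Multiset.count c) h
    rw [Multiset.count_map, Multiset.count_map] at this
    rw [Fintype.card_subtype, Fintype.card_subtype]
    simp only [eq_comm (b := c)]
    exact this
  let f := fun c => (key c).some
  exact ⟨Equiv.ofFiberEquiv f, fun i => Equiv.ofFiberEquiv_map f i⟩

lemma prod_lt_eq_vand {m : ℕ} (v : Fin m → ℂ) :
    ∏ ij ∈ Finset.univ.filter (fun ij : Fin m × Fin m => ij.1 < ij.2), (v ij.1 - v ij.2) ^ 2
      = (Matrix.vandermonde v).det ^ 2 := by
  rw [Matrix.det_vandermonde, Finset.prod_filter, Fintype.prod_prod_type, ← Finset.prod_pow]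
  refine Finset.prod_congr rfl fun i _ => ?_
  rw [← Finset.prod_pow, ← Finset.prod_filter]
  refine Finset.prod_congr (by ext; simp) fun j _ => by ring

lemma disc_eq_vand {n : ℕ} (r : Fin n → ℂ) (p : Polynomial ℂ)
    (hp : p = ∏ i, (Polynomial.X - Polynomial.C (r i))) :
    disc p = (Matrix.vandermonde r).det ^ 2 := by
  have hm : p.Monic := by
    rw [hp]; exact Polynomial.monic_prod_of_monic _ _ fun i _ => Polynomial.monic_X_sub_C _
  have hr : p.roots = (Finset.univ : Finset (Fin n)).val.map r := by
    rw [hp]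
    have := Polynomial.roots_multiset_prod_X_sub_C ((Finset.univ : Finset (Fin n)).val.map r)
    rw [Multiset.map_map] at this
    exact this
  obtain ⟨e, he⟩ := exists_equiv_of_map_eq p.roots.toList.get r (by
    rw [← hr, Fin.univ_val_map, List.ofFn_get, Multiset.coe_toList])
  unfold disc
  rw [hm.leadingCoeff, one_pow, one_mul, prod_lt_eq_vand]
  generalize p.roots.toList.get = v at *
  generalize p.roots.toList.length = m at *
  obtain rfl : m = n := by simpa using Fintype.card_congr e
  have : Matrix.vandermonde v = (Matrix.vandermonde r).submatrix e id := by
    ext i j; simp [Matrix.vandermonde_apply, he]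
  rw [this, Matrix.det_permute, mul_pow]
  have : (((Equiv.Perm.sign e : ℤˣ) : ℤ) : ℂ) ^ 2 = 1 := by
    rcases Int.units_eq_one_or (Equiv.Perm.sign e) with h | h <;> simp [h]
  rw [this, one_mul]

lemma exists_roots {n : ℕ} (A : Matrix (Fin n) (Fin n) ℂ) :
    ∃ r : Fin n → ℂ, A.charpoly = ∏ i, (Polynomial.X - Polynomial.C (r i)) := by
  have hs : A.charpoly.Splits := IsAlgClosed.splits _
  have h1 := hs.eq_prod_roots_of_monic A.charpoly_monic
  have h2 : A.charpoly.roots.toList.length = n := by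
    rw [Multiset.length_toList, ← hs.natDegree_eq_card_roots, A.charpoly_natDegree_eq_dim]; simp
  refine ⟨fun i => A.charpoly.roots.toList.get (i.cast h2.symm), ?_⟩
  have h3 : A.charpoly.roots = (Finset.univ : Finset (Fin n)).val.map
      (fun i => A.charpoly.roots.toList.get (i.cast h2.symm)) := by
    rw [Fin.univ_val_map]
    conv_lhs => rw [← Multiset.coe_toList A.charpoly.roots]
    congr 1
    apply List.ext_get <;> simp [h2]
  conv_lhs => rw [h1, h3, Multiset.map_map]
  rfl

lemma disc_smul {n : ℕ} (A : Matrix (Fin n) (Fin n) ℂ) (t : ℂ) :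
    disc (t • A).charpoly = t ^ (n * (n - 1)) * disc A.charpoly := by
  obtain ⟨r, hr⟩ := exists_roots A
  have h : (t • A).charpoly = ∏ i, (Polynomial.X - Polynomial.C (t * r i)) := by
    by_cases ht : t = 0
    · subst ht; simp [Matrix.charpoly_zero]
    · apply Polynomial.funext
      intro x
      have h2 := congrArg (Polynomial.eval (t⁻¹ * x)) hr
      rw [Matrix.eval_charpoly] at h2
      rw [Matrix.eval_charpoly]
      have : Matrix.scalar (Fin n) x - t • A = t • (Matrix.scalar (Fin n) (t⁻¹ * x) - A) := by
        ext i j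
        simp [Matrix.diagonal_apply, mul_sub]
        split_ifs <;> field_simp
      rw [this, Matrix.det_smul, h2, Polynomial.eval_prod, Polynomial.eval_prod, Fintype.card_fin,
        ← Fin.prod_const, ← Finset.prod_mul_distrib]
      refine Finset.prod_congr rfl fun i _ => ?_
      simp; field_simp
  rw [disc_eq_vand _ _ h, disc_eq_vand _ _ hr, Matrix.det_vandermonde, Matrix.det_vandermonde]
  simp only [← mul_sub, Finset.prod_mul_distrib, mul_pow, Finset.prod_const]
  congr 1
  rw [Finset.prod_pow_eq_pow_sum, ← pow_mul]
  congr 1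
  simp only [Fin.card_Ioi]
  rw [Fin.sum_univ_eq_sum_range (fun i => n - 1 - i) n, Finset.sum_range_reflect (fun i => i) n,
    Finset.sum_range_id_mul_two]

/-- Evaluation of a polynomial in the entries at a matrix. -/
noncomputable def ev {n : ℕ} (A : Matrix (Fin n) (Fin n) ℂ) (F : MvPolynomial (SymIdx n) ℂ) : ℂ :=
  MvPolynomial.eval (fun s => A s.1.1 s.1.2) F

lemma ev_mul {n : ℕ} (A : Matrix (Fin n) (Fin n) ℂ) (F G : MvPolynomial (SymIdx n) ℂ) :
    ev A (F * G) = ev A F * ev A G := by simp [ev]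

lemma ev_ext {n : ℕ} {F G : MvPolynomial (SymIdx n) ℂ}
    (h : ∀ A : Matrix (Fin n) (Fin n) ℂ, A.IsSymm → ev A F = ev A G) : F = G := by
  apply MvPolynomial.funext
  intro x
  let A : Matrix (Fin n) (Fin n) ℂ := fun i j => x ⟨(min i j, max i j), min_le_max⟩
  have hA : A.IsSymm := by
    ext i j
    change x _ = x _
    congr 2
    rw [min_comm, max_comm]
  have hx : (fun s : SymIdx n => A s.1.1 s.1.2) = x := by
    ext ⟨⟨i, j⟩, hij⟩
    have hij' : i ≤ j := hij
    simp [A, hij']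
  have := h A hA
  simpa only [ev, hx] using this

lemma eval_bind {σ τ : Type*} (g : σ → MvPolynomial τ ℂ) (x : τ → ℂ) (F : MvPolynomial σ ℂ) :
    MvPolynomial.eval x (MvPolynomial.aeval g F)
      = MvPolynomial.eval (fun s => MvPolynomial.eval x (g s)) F := by
  induction F using MvPolynomial.induction_on with
  | C a => simp
  | add p q hp hq => rw [map_add, map_add, map_add, hp, hq]
  | mul_X p i hp => rw [map_mul, map_mul, map_mul, hp]; simp

/-- generic symmetric matrix -/
noncomputable def gen (n : ℕ) : Matrix (Fin n) (Fin n) (MvPolynomial (SymIdx n) ℂ) :=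
  fun i j => MvPolynomial.X ⟨(min i j, max i j), min_le_max⟩

/-- Substitution of `Q A Qᵀ` for `A`. -/
noncomputable def phi {n : ℕ} (Q : Matrix (Fin n) (Fin n) ℂ) :
    MvPolynomial (SymIdx n) ℂ →ₐ[ℂ] MvPolynomial (SymIdx n) ℂ :=
  MvPolynomial.aeval fun s =>
    (Q.map MvPolynomial.C * gen n * Qᵀ.map MvPolynomial.C : Matrix _ _ _) s.1.1 s.1.2

lemma ev_phi {n : ℕ} (Q A : Matrix (Fin n) (Fin n) ℂ) (hA : A.IsSymm)
    (F : MvPolynomial (SymIdx n) ℂ) : ev A (phi Q F) = ev (Q * A * Qᵀ) F := by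
  unfold ev phi
  rw [eval_bind]
  congr 2
  ext s
  have hg : ∀ i j, MvPolynomial.eval (fun s : SymIdx n => A s.1.1 s.1.2) (gen n i j) = A i j := by
    intro i j
    simp only [gen, MvPolynomial.eval_X]
    rcases le_total i j with h | h
    · simp [h]
    · simp [h, hA.apply]
  simp [Matrix.mul_apply, hg]

lemma symm_conj {n : ℕ} (Q A : Matrix (Fin n) (Fin n) ℂ) (hA : A.IsSymm) :
    (Q * A * Qᵀ).IsSymm := by
  unfold Matrix.IsSymm
  rw [Matrix.transpose_mul, Matrix.transpose_mul, Matrix.transpose_transpose, hA.eq, mul_assoc]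

/-- Plane rotation. -/
noncomputable def rot {n : ℕ} (i j : Fin n) (θ : ℂ) : Matrix (Fin n) (Fin n) ℂ :=
  1 + (Complex.cos θ - 1) • (Matrix.single i i 1 + Matrix.single j j 1)
    + Complex.sin θ • (Matrix.single i j 1 - Matrix.single j i 1)

lemma rot_transpose {n : ℕ} (i j : Fin n) (θ : ℂ) : (rot i j θ)ᵀ = rot i j (-θ) := by
  simp only [rot, Matrix.transpose_add, Matrix.transpose_sub, Matrix.transpose_smul,
    Matrix.transpose_single, Matrix.transpose_one, Complex.cos_neg, Complex.sin_neg]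
  module

lemma rot_zero {n : ℕ} (i j : Fin n) : rot i j 0 = 1 := by simp [rot]

lemma rot_add {n : ℕ} {i j : Fin n} (hij : i ≠ j) (θ η : ℂ) :
    rot i j θ * rot i j η = rot i j (θ + η) := by
  have hji := hij.symm
  unfold rot
  set T : Matrix (Fin n) (Fin n) ℂ := Matrix.single i i 1 + Matrix.single j j 1 with hT
  set J : Matrix (Fin n) (Fin n) ℂ := Matrix.single i j 1 - Matrix.single j i 1 with hJ
  have h1 : T * T = T := by
    simp [hT, mul_add, add_mul, hij, hji]
  have h2 : T * J = J := by
    simp [hT, hJ, mul_sub, add_mul, hij, hji]; try abel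
  have h3 : J * T = J := by
    simp [hT, hJ, sub_mul, mul_add, hij, hji]; try abel
  have h4 : J * J = -T := by
    simp [hT, hJ, sub_mul, mul_sub, hij, hji]; try abel
  rw [Complex.cos_add, Complex.sin_add]
  simp only [mul_add, add_mul, smul_mul_assoc, mul_smul_comm, h1, h2, h3, h4, one_mul, mul_one]
  module

lemma rot_mul_transpose {n : ℕ} {i j : Fin n} (hij : i ≠ j) (θ : ℂ) :
    rot i j θ * (rot i j θ)ᵀ = 1 := by
  rw [rot_transpose, rot_add hij, add_neg_cancel, rot_zero]

lemma rot_pi_comm {n : ℕ} {i j k : Fin n} (hij : i ≠ j) (hik : i ≠ k) (hjk : j ≠ k) (θ : ℂ) :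
    rot i k Real.pi * rot i j (-θ) = rot i j θ * rot i k Real.pi := by
  have hji := hij.symm
  have hki := hik.symm
  have hkj := hjk.symm
  unfold rot
  simp only [Complex.cos_pi, Complex.sin_pi, Complex.cos_neg, Complex.sin_neg, zero_smul, add_zero]
  simp only [mul_add, add_mul, mul_sub, sub_mul, smul_mul_assoc, mul_smul_comm, one_mul, mul_one]
  simp only [Matrix.single_mul_single_same, Matrix.single_mul_single_of_ne _ _ _ _ hij,
    Matrix.single_mul_single_of_ne _ _ _ _ hji, Matrix.single_mul_single_of_ne _ _ _ _ hik,
    Matrix.single_mul_single_of_ne _ _ _ _ hki, Matrix.single_mul_single_of_ne _ _ _ _ hjk,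
    Matrix.single_mul_single_of_ne _ _ _ _ hkj, mul_one]
  module

lemma rot_half_diag {n : ℕ} {i j : Fin n} (hij : i ≠ j) (x : Fin n → ℂ) :
    rot i j (Real.pi / 2) * Matrix.diagonal x * (rot i j (Real.pi / 2))ᵀ
      = Matrix.diagonal (x ∘ Equiv.swap i j) := by
  have h : rot i j (Real.pi / 2) * Matrix.diagonal x
      = Matrix.diagonal (x ∘ Equiv.swap i j) * rot i j (Real.pi / 2) := by
    ext a b
    rw [Matrix.mul_diagonal, Matrix.diagonal_mul]
    simp only [rot, Complex.cos_pi_div_two, Complex.sin_pi_div_two, Matrix.add_apply,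
      Matrix.sub_apply, Matrix.smul_apply, Matrix.single_apply, Matrix.one_apply, Function.comp,
      Equiv.swap_apply_def, smul_eq_mul]
    by_cases hai : a = i <;> by_cases haj : a = j <;> by_cases hbi : b = i <;>
      by_cases hbj : b = j <;> by_cases hab : a = b <;> grind
  rw [h, mul_assoc, rot_mul_transpose hij, mul_one]

/-- Semi-invariance of `F` under conjugation by `Q`. -/
def Semi {n : ℕ} (F : MvPolynomial (SymIdx n) ℂ) (Q : Matrix (Fin n) (Fin n) ℂ) : Prop :=
  ∃ c : ℂ, ∀ A : Matrix (Fin n) (Fin n) ℂ, A.IsSymm → ev (Q * A * Qᵀ) F = c * ev A F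

lemma conj_conj {n : ℕ} (Q R A : Matrix (Fin n) (Fin n) ℂ) :
    Q * (R * A * Rᵀ) * Qᵀ = (Q * R) * A * (Q * R)ᵀ := by
  simp only [Matrix.transpose_mul, mul_assoc]

lemma Semi.mul {n : ℕ} {F : MvPolynomial (SymIdx n) ℂ} {Q R : Matrix (Fin n) (Fin n) ℂ}
    (hQ : Semi F Q) (hR : Semi F R) : Semi F (Q * R) := by
  obtain ⟨c, hc⟩ := hQ
  obtain ⟨d, hd⟩ := hR
  refine ⟨c * d, fun A hA => ?_⟩
  rw [← conj_conj, hc _ (symm_conj _ _ hA), hd _ hA, mul_assoc]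

lemma semi_rot_mul {n : ℕ} {F : MvPolynomial (SymIdx n) ℂ} {i j : Fin n} (hij : i ≠ j) {θ : ℂ}
    (h : Semi F (rot i j θ)) (m : ℕ) : Semi F (rot i j (m * θ)) := by
  induction m with
  | zero => exact ⟨1, fun A _ => by simp [rot_zero]⟩
  | succ m ih =>
    have : rot i j ((m + 1 : ℕ) * θ) = rot i j (m * θ) * rot i j θ := by
      rw [rot_add hij]; congr 1; push_cast; ring
    rw [this]; exact ih.mul h

lemma semi_rot {n : ℕ} {P F : MvPolynomial (SymIdx n) ℂ} (hP0 : P ≠ 0)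
    (hinv : ∀ Q : Matrix (Fin n) (Fin n) ℂ, Q * Qᵀ = 1 → phi Q P = P) (hF : F ∣ P)
    {i j : Fin n} (hij : i ≠ j) (θ : ℂ) : Semi F (rot i j θ) := by
  classical
  have : Fintype (Associates (MvPolynomial (SymIdx n) ℂ))ˣ := Fintype.ofFinite _
  have : Fintype {x : Associates (MvPolynomial (SymIdx n) ℂ) // x ∣ Associates.mk P} :=
    UniqueFactorizationMonoid.fintypeSubtypeDvd _ (Associates.mk_ne_zero.mpr hP0)
  set M := Fintype.card {x : Associates (MvPolynomial (SymIdx n) ℂ) // x ∣ Associates.mk P} with hM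
  let α : ℂ := θ / (M.factorial : ℂ)
  have hdvd : ∀ η, phi (rot i j η) F ∣ P := fun η => by
    have := map_dvd (phi (rot i j η)) hF
    rwa [hinv _ (rot_mul_transpose hij η)] at this
  let f : Fin (M + 1) → {x : Associates (MvPolynomial (SymIdx n) ℂ) // x ∣ Associates.mk P} :=
    fun k => ⟨Associates.mk (phi (rot i j ((k : ℕ) * α)) F), Associates.mk_dvd_mk.2 (hdvd _)⟩
  obtain ⟨a, b, hab, hfab⟩ : ∃ a b : Fin (M + 1), a < b ∧ f a = f b := by
    obtain ⟨a, b, hne, h⟩ := Fintype.exists_ne_map_eq_of_card_lt f (by simp [← hM])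
    rcases lt_or_gt_of_ne hne with h' | h'
    · exact ⟨a, b, h', h⟩
    · exact ⟨b, a, h', h.symm⟩
  have hass : Associated (phi (rot i j ((a : ℕ) * α)) F) (phi (rot i j ((b : ℕ) * α)) F) :=
    Associates.mk_eq_mk_iff_associated.mp (congrArg Subtype.val hfab)
  obtain ⟨u, hu⟩ := hass
  obtain ⟨c, -, hc⟩ := MvPolynomial.isUnit_iff_eq_C_of_isReduced.mp u.isUnit
  have hd : Semi F (rot i j (((b - a : ℕ) : ℂ) * α)) := by
    refine ⟨c, fun A hA => ?_⟩
    have hB : (rot i j (-((a : ℕ) * α)) * A * (rot i j (-((a : ℕ) * α)))ᵀ).IsSymm :=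
      symm_conj _ _ hA
    have h := congrArg (ev (rot i j (-((a : ℕ) * α)) * A * (rot i j (-((a : ℕ) * α)))ᵀ)) hu
    rw [ev_mul, ev_phi _ _ hB, ev_phi _ _ hB, conj_conj, conj_conj, rot_add hij, rot_add hij,
      add_neg_cancel, rot_zero, hc] at h
    have e1 : ((b : ℕ) : ℂ) * α + -((a : ℕ) * α) = ((b - a : ℕ) : ℂ) * α := by
      rw [Nat.cast_sub (le_of_lt hab)]; ring
    rw [e1] at h
    rw [← h]
    simp [ev, mul_comm]
  have hpos : 0 < (b - a : ℕ) := Nat.sub_pos_of_lt hab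
  have hle : (b - a : ℕ) ≤ M := by have := b.2; omega
  obtain ⟨m, hm⟩ := Nat.dvd_factorial hpos hle
  have := semi_rot_mul hij hd m
  have e : (m : ℂ) * (((b - a : ℕ) : ℂ) * α) = θ := by
    have h0 : (M.factorial : ℂ) ≠ 0 := by exact_mod_cast M.factorial_ne_zero
    have h1 : (M.factorial : ℂ) = ((b - a : ℕ) : ℂ) * m := by exact_mod_cast hm
    calc (m : ℂ) * (((b - a : ℕ) : ℂ) * α) = (((b - a : ℕ) : ℂ) * m) * α := by ring
      _ = θ := by rw [← h1]; simp only [α]; field_simp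
  rwa [e] at this

lemma inv_rot {n : ℕ} (hn : 3 ≤ n) {P F : MvPolynomial (SymIdx n) ℂ} (hP0 : P ≠ 0)
    (hinv : ∀ Q : Matrix (Fin n) (Fin n) ℂ, Q * Qᵀ = 1 → phi Q P = P) (hF : F ∣ P)
    {i j : Fin n} (hij : i ≠ j) (θ : ℂ) (A : Matrix (Fin n) (Fin n) ℂ) (hA : A.IsSymm) :
    ev (rot i j θ * A * (rot i j θ)ᵀ) F = ev A F := by
  have hF0 : F ≠ 0 := by rintro rfl; exact hP0 (zero_dvd_iff.mp hF)
  obtain ⟨A0, hA0, hne⟩ : ∃ A : Matrix (Fin n) (Fin n) ℂ, A.IsSymm ∧ ev A F ≠ 0 := by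
    by_contra! hcon
    exact hF0 (ev_ext fun A hA => by rw [hcon A hA]; simp [ev])
  obtain ⟨k, hk⟩ : ∃ k : Fin n, k ∉ ({i, j} : Finset (Fin n)) := by
    by_contra! hcon
    have h1 : (Finset.univ : Finset (Fin n)) ⊆ {i, j} := fun k _ => hcon k
    have h2 := Finset.card_le_card h1
    have h3 : ({i, j} : Finset (Fin n)).card ≤ 2 := Finset.card_le_two
    simp at h2; omega
  simp only [Finset.mem_insert, Finset.mem_singleton, not_or] at hk
  obtain ⟨hki, hkj⟩ := hk
  obtain ⟨c, hc⟩ := semi_rot hP0 hinv hF hij (θ / 2)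
  obtain ⟨c', hc'⟩ := semi_rot hP0 hinv hF hij (-(θ / 2))
  obtain ⟨d, hd⟩ := semi_rot hP0 hinv hF (Ne.symm hki) (Real.pi : ℂ)
  obtain ⟨d', hd'⟩ := semi_rot hP0 hinv hF (Ne.symm hki) (-(Real.pi : ℂ))
  have h1 : c * c' = 1 := by
    have h := hc _ (symm_conj (rot i j (-(θ / 2))) _ hA0)
    rw [conj_conj, rot_add hij, add_neg_cancel, rot_zero, hc' _ hA0] at h
    simp at h
    apply mul_right_cancel₀ hne
    rw [mul_assoc, ← h, one_mul]
  have h2 : d * d' = 1 := by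
    have h := hd _ (symm_conj (rot i k (-(Real.pi : ℂ))) _ hA0)
    rw [conj_conj, rot_add (Ne.symm hki), add_neg_cancel, rot_zero, hd' _ hA0] at h
    simp at h
    apply mul_right_cancel₀ hne
    rw [mul_assoc, ← h, one_mul]
  have h3 : d * c' = c * d := by
    have h := hd _ (symm_conj (rot i j (-(θ / 2))) _ hA0)
    rw [conj_conj, rot_pi_comm hij (Ne.symm hki) (Ne.symm hkj), hc' _ hA0, ← conj_conj,
      hc _ (symm_conj _ _ hA0), hd _ hA0] at h
    apply mul_right_cancel₀ hne
    linear_combination -h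
  have h4 : c * c = 1 := by linear_combination h1 + c * (c' - c) * h2 - c * d' * h3
  have e : rot i j θ = rot i j (θ / 2) * rot i j (θ / 2) := by rw [rot_add hij, add_halves]
  rw [e, ← conj_conj, hc _ (symm_conj _ _ hA), hc _ hA, ← mul_assoc, h4, one_mul]

lemma dvd_iff_vanish {n : ℕ} (i j : Fin n) (h : MvPolynomial (Fin n) ℂ) :
    (MvPolynomial.X i - MvPolynomial.X j) ∣ h ↔
      ∀ x : Fin n → ℂ, x i = x j → MvPolynomial.eval x h = 0 := by
  constructor
  · rintro ⟨g, rfl⟩ x hx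
    simp [hx]
  · intro hv
    let g : Fin n → MvPolynomial (Fin n) ℂ := Function.update MvPolynomial.X i (MvPolynomial.X j)
    have h0 : MvPolynomial.aeval g h = 0 := by
      apply MvPolynomial.funext
      intro x
      rw [eval_bind, map_zero]
      apply hv
      by_cases hij : j = i
      · rw [hij]
      · simp [g, Function.update_of_ne hij]
    let I : Ideal (MvPolynomial (Fin n) ℂ) :=
      Ideal.span {MvPolynomial.X i - MvPolynomial.X j}
    have h1 : (Ideal.Quotient.mkₐ ℂ I).comp (MvPolynomial.aeval g) = Ideal.Quotient.mkₐ ℂ I := by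
      apply MvPolynomial.algHom_ext
      intro k
      by_cases hk : k = i
      · subst hk
        simp only [AlgHom.comp_apply, MvPolynomial.aeval_X, g, Function.update_self]
        symm
        apply Ideal.Quotient.eq.mpr
        exact Ideal.subset_span rfl
      · simp [g, Function.update_of_ne hk]
    have h2 := congrArg (fun q => q h) h1
    simp only [AlgHom.comp_apply, h0, map_zero] at h2
    exact Ideal.mem_span_singleton.mp (Ideal.Quotient.eq_zero_iff_mem.mp h2.symm)

lemma prime_X_sub_X {n : ℕ} {i j : Fin n} (hij : i ≠ j) :
    Prime (MvPolynomial.X i - MvPolynomial.X j : MvPolynomial (Fin n) ℂ) := by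
  let g : Fin n → MvPolynomial (Fin n) ℂ := Function.update MvPolynomial.X i (MvPolynomial.X j)
  have key : ∀ h : MvPolynomial (Fin n) ℂ,
      (MvPolynomial.X i - MvPolynomial.X j) ∣ h ↔ MvPolynomial.aeval g h = 0 := by
    intro h
    constructor
    · rintro ⟨q, rfl⟩
      rw [map_mul, map_sub, MvPolynomial.aeval_X, MvPolynomial.aeval_X]
      simp [g, Function.update_of_ne hij.symm]
    · intro h0
      rw [dvd_iff_vanish]
      intro x hx
      have := congrArg (MvPolynomial.eval x) h0
      rw [eval_bind, map_zero] at this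
      convert this using 3
      ext k
      by_cases hk : k = i
      · subst hk; simp [g, hx]
      · simp [g, Function.update_of_ne hk]
  refine ⟨?_, ?_, ?_⟩
  · intro h
    rw [sub_eq_zero] at h
    exact hij (MvPolynomial.X_injective h)
  · intro hu
    have := (dvd_iff_vanish i j 1).mp hu.dvd 0 rfl
    simp at this
  · intro a b hab
    rw [key, map_mul, mul_eq_zero] at hab
    rwa [key, key]

lemma sq_dvd_of_nonunit {n : ℕ} {f V : MvPolynomial (Fin n) ℂ}
    (hV : V = ∏ ij ∈ Finset.univ.filter (fun ij : Fin n × Fin n => ij.1 < ij.2),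
      (MvPolynomial.X ij.1 - MvPolynomial.X ij.2) ^ 2)
    (hV0 : V ≠ 0) (hf : f ∣ V) (hfu : ¬ IsUnit f)
    (hsym : ∀ i j : Fin n, i ≠ j → ∀ x : Fin n → ℂ,
      MvPolynomial.eval (x ∘ Equiv.swap i j) f = MvPolynomial.eval x f)
    {k l : Fin n} (hkl : k ≠ l) :
    (MvPolynomial.X k - MvPolynomial.X l) ^ 2 ∣ f := by
  have hf0 : f ≠ 0 := by rintro rfl; exact hV0 (zero_dvd_iff.mp hf)
  have hperm : ∀ σ : Equiv.Perm (Fin n), ∀ x : Fin n → ℂ,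
      MvPolynomial.eval (x ∘ σ) f = MvPolynomial.eval x f := by
    intro σ
    induction σ using Equiv.Perm.swap_induction_on with
    | one => intro x; rfl
    | swap_mul σ a b hab ih =>
      intro x
      rw [Equiv.Perm.coe_mul, ← Function.comp_assoc, ih, hsym a b hab]
  obtain ⟨q, hq, hqf⟩ := WfDvdMonoid.exists_irreducible_factor hfu hf0
  have hqV := hqf.trans hf
  rw [hV] at hqV
  obtain ⟨⟨i, j⟩, hmem, hqd⟩ := hq.prime.exists_mem_finset_dvd hqV
  have hij : i < j := by simpa using hmem
  have hqd' := hq.prime.dvd_of_dvd_pow hqd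
  have hdf : (MvPolynomial.X i - MvPolynomial.X j) ∣ f :=
    ((hq.associated_of_dvd (prime_X_sub_X hij.ne).irreducible hqd').symm.dvd).trans hqf
  have hkf : (MvPolynomial.X k - MvPolynomial.X l) ∣ f := by
    rw [dvd_iff_vanish] at hdf ⊢
    intro x hx
    obtain ⟨σ, h1, h2⟩ : ∃ σ : Equiv.Perm (Fin n), σ i = k ∧ σ j = l := by
      refine ⟨Equiv.swap (Equiv.swap i k j) l * Equiv.swap i k, ?_, ?_⟩
      · have : k ≠ Equiv.swap i k j := by
          intro h
          have h' := congrArg (Equiv.swap i k) h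
          simp at h'
          exact hij.ne h'
        simp [Equiv.swap_apply_of_ne_of_ne this hkl]
      · simp
    rw [← hperm σ]
    apply hdf
    simp [h1, h2, hx]
  obtain ⟨h, rfl⟩ := hkf
  rw [pow_two]
  apply mul_dvd_mul_left
  have hanti : (MvPolynomial.X k - MvPolynomial.X l) *
      (h + MvPolynomial.rename (Equiv.swap k l) h) = 0 := by
    apply MvPolynomial.funext
    intro x
    have := hsym k l hkl x
    simp only [map_mul, map_sub, MvPolynomial.eval_X, Function.comp, Equiv.swap_apply_left,
      Equiv.swap_apply_right] at this
    simp only [map_mul, map_sub, map_add, map_zero, MvPolynomial.eval_X,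
      MvPolynomial.eval_rename]
    linear_combination -this
  have h2 := (mul_eq_zero.mp hanti).resolve_left (prime_X_sub_X hkl).ne_zero
  rw [dvd_iff_vanish]
  intro x hx
  have h3 := congrArg (MvPolynomial.eval x) h2
  have h4 : x ∘ Equiv.swap k l = x := by
    ext a
    simp only [Function.comp, Equiv.swap_apply_def]
    split_ifs with h1 h2
    · rw [h1, hx]
    · rw [h2, hx]
    · rfl
  rw [map_add, MvPolynomial.eval_rename, h4, map_zero] at h3
  linear_combination h3 / 2

lemma unit_or_unit {n : ℕ} (hn : 3 ≤ n) {f g : MvPolynomial (Fin n) ℂ}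
    (hfg : f * g = ∏ ij ∈ Finset.univ.filter (fun ij : Fin n × Fin n => ij.1 < ij.2),
      (MvPolynomial.X ij.1 - MvPolynomial.X ij.2) ^ 2)
    (hf : ∀ i j : Fin n, i ≠ j → ∀ x : Fin n → ℂ,
      MvPolynomial.eval (x ∘ Equiv.swap i j) f = MvPolynomial.eval x f)
    (hg : ∀ i j : Fin n, i ≠ j → ∀ x : Fin n → ℂ,
      MvPolynomial.eval (x ∘ Equiv.swap i j) g = MvPolynomial.eval x g) :
    IsUnit f ∨ IsUnit g := by
  by_contra! hcon
  obtain ⟨hfu, hgu⟩ := hcon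
  have hV0 : f * g ≠ 0 := by
    rw [hfg]
    refine Finset.prod_ne_zero_iff.mpr fun ij h => pow_ne_zero _ (prime_X_sub_X ?_).ne_zero
    simp at h; exact h.ne
  let a : Fin n := ⟨0, by omega⟩
  let b : Fin n := ⟨1, by omega⟩
  have hab : a < b := by simp [a, b]
  obtain ⟨f', hf'⟩ := sq_dvd_of_nonunit hfg hV0 (dvd_mul_right f g) hfu hf hab.ne
  obtain ⟨g', hg'⟩ := sq_dvd_of_nonunit hfg hV0 (dvd_mul_left g f) hgu hg hab.ne
  have hmem : (a, b) ∈ Finset.univ.filter (fun ij : Fin n × Fin n => ij.1 < ij.2) := by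
    simpa using hab
  rw [← Finset.mul_prod_erase _ _ hmem] at hfg
  have h1 : (MvPolynomial.X a - MvPolynomial.X b) ^ 2 * (f' * g') =
      ∏ ij ∈ (Finset.univ.filter (fun ij : Fin n × Fin n => ij.1 < ij.2)).erase (a, b),
      (MvPolynomial.X ij.1 - MvPolynomial.X ij.2 : MvPolynomial (Fin n) ℂ) ^ 2 := by
    apply mul_left_cancel₀ (pow_ne_zero 2 (prime_X_sub_X (n := n) hab.ne).ne_zero)
    rw [← hfg, hf', hg']; ring
  have h2 := congrArg (MvPolynomial.eval (fun k : Fin n => (((k : ℕ) - 1 : ℕ) : ℂ))) h1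
  rw [map_prod] at h2
  have h3 : MvPolynomial.eval (fun k : Fin n => (((k : ℕ) - 1 : ℕ) : ℂ))
      ((MvPolynomial.X a - MvPolynomial.X b) ^ 2 * (f' * g')) = 0 := by simp [a, b]
  rw [h3] at h2
  obtain ⟨⟨k, l⟩, hkl, h4⟩ := Finset.prod_eq_zero_iff.mp h2.symm
  simp only [Finset.mem_erase, Finset.mem_filter, Finset.mem_univ, true_and, ne_eq,
    Prod.mk.injEq] at hkl
  simp only [map_pow, map_sub, MvPolynomial.eval_X] at h4
  have h5 := pow_eq_zero_iff (two_ne_zero) |>.mp h4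
  rw [sub_eq_zero] at h5
  have h6 : (k : ℕ) - 1 = (l : ℕ) - 1 := by exact_mod_cast h5
  obtain ⟨h7, h8⟩ := hkl
  have h8' : (k : ℕ) < l := h8
  apply h7
  constructor <;> apply Fin.ext <;> simp [a, b] <;> omega

/-- Restriction to diagonal matrices. -/
noncomputable def dg {n : ℕ} : MvPolynomial (SymIdx n) ℂ →ₐ[ℂ] MvPolynomial (Fin n) ℂ :=
  MvPolynomial.aeval fun s => if s.1.1 = s.1.2 then MvPolynomial.X s.1.1 else 0

lemma eval_dg {n : ℕ} (F : MvPolynomial (SymIdx n) ℂ) (x : Fin n → ℂ) :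
    MvPolynomial.eval x (dg F) = ev (Matrix.diagonal x) F := by
  unfold dg ev
  rw [eval_bind]
  congr 2
  ext s
  by_cases h : s.1.1 = s.1.2 <;> simp [h]

lemma unit_of_dg {n : ℕ} {P F G : MvPolynomial (SymIdx n) ℂ} (hP0 : P ≠ 0) (hPF : P = F * G)
    (hP : ∀ A : Matrix (Fin n) (Fin n) ℂ, A.IsSymm → ev A P = disc A.charpoly)
    (hF : IsUnit (dg F)) : IsUnit F := by
  obtain ⟨c, hc, hcF⟩ := MvPolynomial.isUnit_iff_eq_C_of_isReduced.mp hF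
  have h0 : ev 0 F = c := by
    have := eval_dg F 0
    rw [hcF] at this
    simp at this
    rw [this]
  -- restriction to the line through `A`
  let ln (A : Matrix (Fin n) (Fin n) ℂ) (H : MvPolynomial (SymIdx n) ℂ) : Polynomial ℂ :=
    MvPolynomial.aeval (fun s : SymIdx n => Polynomial.C (A s.1.1 s.1.2) * Polynomial.X) H
  have hln : ∀ A H t, (ln A H).eval t = ev (t • A) H := by
    intro A H t
    simp only [ln, ev]
    induction H using MvPolynomial.induction_on with
    | C a => simp
    | add p q hp hq => simp only [map_add, Polynomial.eval_add, hp, hq]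
    | mul_X p i hp =>
      simp only [map_mul, Polynomial.eval_mul, hp]
      simp only [MvPolynomial.aeval_X, MvPolynomial.eval_X, Polynomial.eval_mul, Polynomial.eval_C,
        Polynomial.eval_X, Matrix.smul_apply, smul_eq_mul]
      rw [mul_comm t]
  have key : (F - MvPolynomial.C c) * P = 0 := by
    apply ev_ext
    intro A hA
    rw [ev_mul]
    have e0 : ev A (0 : MvPolynomial (SymIdx n) ℂ) = 0 := by simp [ev]
    rw [e0]
    by_cases hPA : ev A P = 0
    · rw [hPA, mul_zero]
    have hm : ln A F * ln A G = Polynomial.C (ev A P) * Polynomial.X ^ (n * (n - 1)) := by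
      apply Polynomial.funext
      intro t
      have hs : (t • A).IsSymm := by
        unfold Matrix.IsSymm; rw [Matrix.transpose_smul, hA.eq]
      rw [Polynomial.eval_mul, hln, hln, ← ev_mul, ← hPF, hP _ hs, disc_smul, ← hP _ hA]
      simp only [Polynomial.eval_mul, Polynomial.eval_C, Polynomial.eval_pow, Polynomial.eval_X]
      exact mul_comm _ _
    have hnd : ¬ Polynomial.X ∣ ln A F := by
      intro hd
      rw [Polynomial.X_dvd_iff, Polynomial.coeff_zero_eq_eval_zero, hln, zero_smul, h0] at hd
      exact hc.ne_zero hd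
    have hcop : IsCoprime (ln A F) (Polynomial.X ^ (n * (n - 1))) :=
      (((Polynomial.irreducible_X (R := ℂ)).coprime_iff_not_dvd.mpr hnd).symm).pow_right
    have hu : IsUnit (ln A F) := by
      apply hcop.isUnit_of_dvd
      have : ln A F ∣ Polynomial.C (ev A P) * Polynomial.X ^ (n * (n - 1)) :=
        hm ▸ dvd_mul_right _ _
      rwa [(Polynomial.isUnit_C.mpr (isUnit_iff_ne_zero.mpr hPA)).dvd_mul_left] at this
    obtain ⟨r, -, hr⟩ := Polynomial.isUnit_iff.mp hu
    have e1 := hln A F 1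
    have e2 := hln A F 0
    rw [← hr, Polynomial.eval_C] at e1 e2
    rw [one_smul] at e1
    rw [zero_smul, h0] at e2
    have : ev A (F - MvPolynomial.C c) = 0 := by
      have : ev A (F - MvPolynomial.C c) = ev A F - c := by simp [ev]
      rw [this, ← e1, e2, sub_self]
    rw [this, zero_mul]
  have hFc := (mul_eq_zero.mp key).resolve_right hP0
  rw [sub_eq_zero.mp hFc]
  exact hc.map MvPolynomial.C

/-- For `n ≥ 3`, the discriminant `disc : Sym²(ℂⁿ) → ℂ` — i.e. the polynomial `P` in the
entries of a symmetric matrix whose value at every complex symmetric matrix `A` is the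
discriminant of the characteristic polynomial of `A` — is irreducible over `ℂ`. -/
theorem disc_irreducible (n : ℕ) (hn : 3 ≤ n)
    (P : MvPolynomial (SymIdx n) ℂ)
    (hP : ∀ A : Matrix (Fin n) (Fin n) ℂ, A.IsSymm →
      MvPolynomial.eval (fun s => A s.1.1 s.1.2) P = disc A.charpoly) :
    Irreducible P := by
  have hPe : ∀ A : Matrix (Fin n) (Fin n) ℂ, A.IsSymm → ev A P = disc A.charpoly := hP
  have hdiag : dg P = ∏ ij ∈ Finset.univ.filter (fun ij : Fin n × Fin n => ij.1 < ij.2),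
      (MvPolynomial.X ij.1 - MvPolynomial.X ij.2) ^ 2 := by
    apply MvPolynomial.funext
    intro x
    rw [eval_dg, hPe _ (Matrix.isSymm_diagonal x),
      disc_eq_vand x _ (Matrix.charpoly_diagonal x), ← prod_lt_eq_vand, map_prod]
    simp
  have hP0 : P ≠ 0 := by
    rintro rfl
    rw [map_zero] at hdiag
    refine Finset.prod_ne_zero_iff.mpr (fun ij h => ?_) hdiag.symm
    simp at h
    exact pow_ne_zero _ (prime_X_sub_X h.ne).ne_zero
  have hinv : ∀ Q : Matrix (Fin n) (Fin n) ℂ, Q * Qᵀ = 1 → phi Q P = P := by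
    intro Q hQ
    apply ev_ext
    intro A hA
    rw [ev_phi _ _ hA, hPe _ hA, hPe _ (symm_conj _ _ hA)]
    congr 1
    let U : (Matrix (Fin n) (Fin n) ℂ)ˣ := ⟨Q, Qᵀ, hQ, mul_eq_one_comm.mp hQ⟩
    have h := Matrix.charpoly_units_conj U A
    have h2 : (U : Matrix (Fin n) (Fin n) ℂ)⁻¹ = Qᵀ := Matrix.inv_eq_right_inv hQ
    rw [h2] at h
    exact h
  have hsymm : ∀ F, F ∣ P → ∀ i j : Fin n, i ≠ j → ∀ x : Fin n → ℂ,
      MvPolynomial.eval (x ∘ Equiv.swap i j) (dg F) = MvPolynomial.eval x (dg F) := by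
    intro F hF i j hij x
    rw [eval_dg, eval_dg, ← rot_half_diag hij,
      inv_rot hn hP0 hinv hF hij _ _ (Matrix.isSymm_diagonal x)]
  have main : ∀ F G, P = F * G → IsUnit F ∨ IsUnit G := by
    intro F G hFG
    have h1 : dg F * dg G = _ := (map_mul dg F G).symm.trans (hFG ▸ hdiag)
    rcases unit_or_unit hn h1 (hsymm F (hFG ▸ dvd_mul_right F G))
      (hsymm G (hFG ▸ dvd_mul_left G F)) with h | h
    · exact Or.inl (unit_of_dg hP0 hFG hPe h)
    · exact Or.inr (unit_of_dg hP0 (hFG.trans (mul_comm F G)) hPe h)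
  refine ⟨fun hu => ?_, fun F G h => main F G h⟩
  have h1 := hu.map (dg (n := n))
  let a : Fin n := ⟨0, by omega⟩
  let b : Fin n := ⟨1, by omega⟩
  have hab : a < b := by simp [a, b]
  have hd : (MvPolynomial.X a - MvPolynomial.X b : MvPolynomial (Fin n) ℂ) ∣ dg P := by
    rw [hdiag]
    refine (dvd_pow_self _ two_ne_zero).trans (Finset.dvd_prod_of_mem
      (fun ij : Fin n × Fin n =>
        (MvPolynomial.X ij.1 - MvPolynomial.X ij.2 : MvPolynomial (Fin n) ℂ) ^ 2)
      (a := (a, b)) (by simpa using hab))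
  exact (prime_X_sub_X hab.ne).not_isUnit (isUnit_of_dvd_unit hd h1)
end
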